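/- arXiv:2310.14352 — 2 statements merged into one kernel-verified Lean document; each statement's English description precedes it below -/
import Mathlib

section
/- Let ℓ = 277 and let L be the unique degree-3 intermediate field of ℚ(ζ_ℓ)/ℚ. Then the class number of L is 4, and the ideal class group of L is isomorphic to (ℤ/2ℤ) × (ℤ/2ℤ). -/
instance (ℓ : ℕ+) : FiniteDimensional ℚ (CyclotomicField ℓ ℚ) :=
  inferInstance

instance (ℓ : ℕ+) (L : IntermediateField ℚ (CyclotomicField ℓ ℚ)) : NumberField L := ⟨⟩

/-!
The Gaussian periods `a = η₁` and `b = η₅` of length `92` generate the ring of integers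
`ℤ ⊕ ℤ a ⊕ ℤ b` of the cubic field `L` of conductor `277`: this lattice has discriminant `277 ^ 2`,
and a sublattice of index `277` would force the discriminant of `L` to be `1`. A ring homomorphism
from `𝓞 L` to `R` is therefore a solution in `R` of the multiplication table of `a` and `b`.

Over `ZMod 2` there are three solutions, so `2` splits completely into three conjugate primes.
A rational prime `p` below the Minkowski bound `61.56` is either inert or has a root of the minimal
polynomial of `a`; in the second case some `n - a` has norm `± p * 2 ^ k`, so the primes above `p`
are equivalent to products of primes above `2`. Hence the latter generate the class group.

The square of each prime above `2` is principal, generated by a conjugate of `a - 3`. The prime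
itself is not: otherwise `a - 3` is a square up to a unit. But `L` has unit rank `2`, so its units
have only three generators modulo squares, whereas four quadratic characters of residue fields show
that `-1`, two further units and `a - 3` are independent modulo squares. As the classes of the three
primes have product `1`, any two of them are distinct and generate a Klein four-group.
-/

open NumberField Module Polynomial
open scoped nonZeroDivisors

/-! ### Generators of elementary abelian 2-groups and of unit groups -/

section Groups

theorem natCard_dvd_pow_card_of_closure_eq_top {G : Type*} [CommGroup G] {n : ℕ}
    (hG : ∀ g : G, g ^ n = 1) {S : Finset G} (hS : Subgroup.closure (S : Set G) = ⊤) :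
    Nat.card G ∣ n ^ S.card := by
  have : Group.FG G := Group.fg_iff'.mpr ⟨_, S, rfl, hS⟩
  exact (card_dvd_exponent_pow_rank' G hG).trans (pow_dvd_pow n (Group.rank_le hS))

theorem isKleinFour_of_closure_pair {G : Type*} [CommGroup G] {x y : G} (hx : x ^ 2 = 1)
    (hy : y ^ 2 = 1) (hx1 : x ≠ 1) (hy1 : y ≠ 1) (hxy : x ≠ y)
    (htop : Subgroup.closure {x, y} = ⊤) : IsKleinFour G := by
  classical
  have hsq (g : G) : g ^ 2 = 1 := by
    have hle : Subgroup.closure {x, y} ≤ (powMonoidHom 2 : G →* G).ker := by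
      simp [Subgroup.closure_le, Set.insert_subset_iff, hx, hy]
    exact hle (htop ▸ Subgroup.mem_top g)
  have hdvd : Nat.card G ∣ 2 ^ 2 := (natCard_dvd_pow_card_of_closure_eq_top hsq
    (S := {x, y}) (by simpa using htop)).trans (pow_dvd_pow 2 Finset.card_le_two)
  have : Finite G := Nat.finite_of_card_ne_zero (ne_zero_of_dvd_ne_zero (by norm_num) hdvd)
  have hthree : 3 ≤ Nat.card G := by
    have hcard : ({1, x, y} : Set G).ncard = 3 := by
      rw [Set.ncard_eq_toFinset_card', Finset.card_eq_three]
      exact ⟨1, x, y, hx1.symm, hy1.symm, hxy, by simp⟩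
    exact hcard ▸ Set.ncard_le_card _
  constructor
  · have := Nat.le_of_dvd (by norm_num) hdvd
    interval_cases Nat.card G <;> omega
  · have : Nontrivial G := ⟨x, 1, hx1⟩
    exact (Monoid.exponent_eq_prime_iff Nat.prime_two).mpr fun g hg => orderOf_eq_prime (hsq g) hg

theorem surjective_of_forall_exists_mulSingle_neg_one {G ι : Type*} [Group G] [Finite ι]
    [DecidableEq ι] (f : G →* (ι → ℤˣ)) (hf : ∀ i, ∃ u, f u = Pi.mulSingle i (-1)) :
    Function.Surjective f := by
  have := Fintype.ofFinite ι
  rw [← MonoidHom.range_eq_top, eq_top_iff]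
  intro y _
  rw [← Finset.univ_prod_mulSingle y]
  refine f.range.prod_mem fun i _ => ?_
  rcases Int.units_eq_one_or (y i) with h | h <;> rw [h]
  · simp
  · exact hf i

end Groups

section Units

variable {K : Type*} [Field K] [NumberField K]

variable (K) in
theorem exists_finset_closure_units_eq_top : ∃ S : Finset (𝓞 K)ˣ,
    S.card ≤ Units.rank K + 1 ∧ Subgroup.closure (S : Set (𝓞 K)ˣ) = ⊤ := by
  classical
  obtain ⟨ζ, hζ⟩ := IsCyclic.exists_generator (α := Units.torsion K)
  refine ⟨insert ↑ζ (Finset.univ.image (Units.fundSystem K)), ?_, ?_⟩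
  · exact (Finset.card_insert_le _ _).trans
      (Nat.add_le_add_right (Finset.card_image_le.trans (by simp)) 1)
  · rw [eq_top_iff, ← Units.closure_fundSystem_sup_torsion_eq_top, sup_le_iff]
    refine ⟨Subgroup.closure_mono (by simp), fun u hu => ?_⟩
    obtain ⟨n, hn⟩ := hζ ⟨u, hu⟩
    rw [← show (ζ : (𝓞 K)ˣ) ^ n = u from congrArg Subtype.val hn]
    exact zpow_mem (Subgroup.subset_closure (by simp)) n

theorem card_le_of_surjective_units {ι : Type*} [Fintype ι] {f : (𝓞 K)ˣ →* (ι → ℤˣ)}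
    (hf : Function.Surjective f) : Fintype.card ι ≤ Units.rank K + 1 := by
  classical
  obtain ⟨S, hcard, hS⟩ := exists_finset_closure_units_eq_top K
  have hdvd := natCard_dvd_pow_card_of_closure_eq_top (n := 2) (S := S.image f)
    (fun g => funext fun i => Int.units_pow_two (g i))
    (by rw [Finset.coe_image, ← MonoidHom.map_closure, hS, Subgroup.map_top_of_surjective f hf])
  simp only [Nat.card_eq_fintype_card, Fintype.card_pi, Fintype.card_units_int, Finset.prod_const,
    Finset.card_univ] at hdvd
  exact ((Nat.pow_dvd_pow_iff_le_right one_lt_two).mp hdvd).trans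
    (Finset.card_image_le.trans hcard)

theorem exists_forall_not_associated_sq {ι : Type*} [Fintype ι] [DecidableEq ι]
    (hι : Units.rank K + 1 < Fintype.card ι) (χ : ι → 𝓞 K →* ℤ) (v : ι → 𝓞 K)
    (hv : ∀ i j, χ i (v j) = if i = j then -1 else 1) :
    ∃ j, ∀ c, ¬ Associated (c ^ 2) (v j) := by
  by_contra! h
  let f : (𝓞 K)ˣ →* (ι → ℤˣ) := MonoidHom.pi fun i => Units.map (χ i)
  refine hι.not_ge (card_le_of_surjective_units
    (surjective_of_forall_exists_mulSingle_neg_one f fun j => ?_))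
  obtain ⟨c, u, hcu⟩ := h j
  refine ⟨u, funext fun i => Units.ext ?_⟩
  have hmul : χ i c ^ 2 * χ i u = χ i (v j) := by rw [← map_pow, ← map_mul, hcu]
  have hu : IsUnit (χ i (v j)) := by rw [hv]; split_ifs <;> simp
  have hc : IsUnit (χ i c) :=
    (isUnit_pow_iff two_ne_zero).mp (isUnit_of_mul_isUnit_left (hmul ▸ hu))
  rw [Int.isUnit_sq hc, one_mul, hv] at hmul
  rw [Pi.mulSingle_apply, apply_ite Units.val]
  exact hmul

end Units

/-! ### Ideals of Dedekind domains free over `ℤ` -/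

section Dedekind

theorem not_isPrincipal_of_sq_eq_span {R : Type*} [CommRing R] [IsDomain R] {I : Ideal R} {x : R}
    (hI : I ^ 2 = Ideal.span {x}) (hx : ∀ c, ¬ Associated (c ^ 2) x) : ¬ I.IsPrincipal := by
  rintro ⟨c, rfl⟩
  exact hx c (Ideal.span_singleton_eq_span_singleton.mp
    ((Ideal.span_singleton_pow c 2).symm.trans hI))

variable {R : Type*} [CommRing R] [IsDedekindDomain R]

theorem mk0_mem_of_forall_isPrime {H : Subgroup (ClassGroup R)} (I : (Ideal R)⁰)
    (h : ∀ P : (Ideal R)⁰, (P : Ideal R).IsPrime → (I : Ideal R) ≤ P → ClassGroup.mk0 P ∈ H) :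
    ClassGroup.mk0 I ∈ H := by
  obtain ⟨I, hI⟩ := I
  induction I using UniqueFactorizationMonoid.induction_on_prime with
  | h₁ => exact absurd rfl (nonZeroDivisors.ne_zero hI)
  | h₂ J hJ =>
    obtain rfl := (isUnit_iff_eq_one).mp hJ
    exact (map_one ClassGroup.mk0 : ClassGroup.mk0 (1 : (Ideal R)⁰) = 1) ▸ H.one_mem
  | h₃ J P hJ hP ih =>
    have hJ' : J ∈ (Ideal R)⁰ := mem_nonZeroDivisors_of_ne_zero hJ
    have hP' : P ∈ (Ideal R)⁰ := mem_nonZeroDivisors_of_ne_zero hP.ne_zero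
    rw [show (⟨P * J, hI⟩ : (Ideal R)⁰) = ⟨P, hP'⟩ * ⟨J, hJ'⟩ from rfl, map_mul]
    exact mul_mem (h _ (Ideal.isPrime_of_prime hP) (Ideal.mul_le_left : P * J ≤ P))
      (ih hJ' fun Q hQ hJQ => h Q hQ ((Ideal.mul_le_right : P * J ≤ J).trans hJQ))

variable [Module.Free ℤ R]

theorem eq_of_dvd_of_absNorm_eq {I J : Ideal R} (hIJ : I ∣ J) (hJ : Ideal.absNorm J ≠ 0)
    (h : Ideal.absNorm I = Ideal.absNorm J) : I = J := by
  obtain ⟨C, rfl⟩ := hIJ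
  rw [map_mul] at h hJ
  have hC : Ideal.absNorm C = 1 := by simpa [left_ne_zero_of_mul hJ] using h
  rw [Ideal.absNorm_eq_one_iff.mp hC, Ideal.mul_top]

theorem eq_pow_of_forall_isPrime {I P : Ideal R} {p k : ℕ} (hp : p.Prime)
    (hP : Ideal.absNorm P = p) (hI : Ideal.absNorm I = p ^ k)
    (h : ∀ Q : Ideal R, Q.IsPrime → I ≤ Q → Q = P) : I = P ^ k := by
  have hI0 : I ≠ ⊥ := by
    rintro rfl
    exact pow_ne_zero k hp.ne_zero (hI.symm.trans Ideal.absNorm_bot)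
  have hrep := Multiset.eq_replicate_card.mpr fun Q hQ =>
    h Q (Ideal.isPrime_of_prime (UniqueFactorizationMonoid.prime_of_normalized_factor Q hQ))
      (Ideal.le_of_dvd (UniqueFactorizationMonoid.dvd_of_mem_normalizedFactors hQ))
  have hprod : I = P ^ (UniqueFactorizationMonoid.normalizedFactors I).card := by
    rw [← Multiset.prod_replicate, ← hrep, Ideal.prod_normalizedFactors_eq_self hI0]
  rw [hprod, map_pow, hP] at hI
  rwa [Nat.pow_right_injective hp.two_le hI] at hprod

theorem exists_ringHom_ker_eq {p : ℕ} (hp : p.Prime) {P : Ideal R} (hP : Ideal.absNorm P = p) :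
    ∃ φ : R →+* ZMod p, RingHom.ker φ = P := by
  have hcard : Nat.card (R ⧸ P) = p := by rw [← hP, Ideal.absNorm_apply, Submodule.cardQuot_apply]
  have : Finite (R ⧸ P) := Nat.finite_of_card_ne_zero (hcard ▸ hp.ne_zero)
  have := Fintype.ofFinite (R ⧸ P)
  let e := ZMod.ringEquivOfPrime (R ⧸ P) hp (by rw [← Nat.card_eq_fintype_card, hcard])
  refine ⟨(e.symm : R ⧸ P →+* ZMod p).comp (Ideal.Quotient.mk P), ?_⟩
  rw [RingHom.ker_comp_of_injective _ e.symm.injective, Ideal.mk_ker]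

theorem absNorm_ker {p : ℕ} (φ : R →+* ZMod p) : Ideal.absNorm (RingHom.ker φ) = p := by
  rw [Ideal.absNorm_apply, Submodule.cardQuot_apply]
  let e := RingHom.quotientKerEquivOfSurjective (ZMod.ringHom_surjective φ)
  exact (Nat.card_congr e.toEquiv).trans (Nat.card_zmod p)

/-- The ideal class of the degree-one prime cut out by a homomorphism to `ZMod p`. -/
noncomputable def kerClass {p : ℕ} [NeZero p] (φ : R →+* ZMod p) : ClassGroup R :=
  ClassGroup.mk0 ⟨RingHom.ker φ, mem_nonZeroDivisors_of_ne_zero fun h =>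
    NeZero.ne p ((absNorm_ker φ).symm.trans ((congrArg _ h).trans Ideal.absNorm_bot))⟩

theorem kerClass_eq_one_iff {p : ℕ} [NeZero p] {φ : R →+* ZMod p} :
    kerClass φ = 1 ↔ (RingHom.ker φ).IsPrincipal :=
  ClassGroup.mk0_eq_one_iff _

theorem kerClass_sq_eq_one {p : ℕ} [NeZero p] {φ : R →+* ZMod p} {x : R}
    (h : RingHom.ker φ ^ 2 = Ideal.span {x}) : kerClass φ ^ 2 = 1 := by
  rw [kerClass, ← map_pow, ClassGroup.mk0_eq_one_iff]
  exact ⟨x, h⟩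

variable [Module.Finite ℤ R]

theorem prod_ker_eq_span {ι : Type*} [Fintype ι] {p : ℕ} [Fact p.Prime] {φ : ι → (R →+* ZMod p)}
    (hφ : Function.Injective φ) (hι : Fintype.card ι = finrank ℤ R) :
    ∏ i, RingHom.ker (φ i) = Ideal.span {(p : R)} := by
  have hmax (i : ι) : (RingHom.ker (φ i)).IsMaximal :=
    RingHom.ker_isMaximal_of_surjective _ (ZMod.ringHom_surjective (φ i))
  have hnorm : Ideal.absNorm (Ideal.span {(p : R)}) = p ^ finrank ℤ R :=
    Ideal.absNorm_span_natCast p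
  refine eq_of_dvd_of_absNorm_eq (Ideal.dvd_iff_le.mpr ?_) ?_ ?_
  · rw [Ideal.prod_eq_iInf_of_pairwise_isCoprime fun i _ j _ hij =>
      Ideal.isCoprime_of_isMaximal fun h => hij (hφ (ZMod.ringHom_eq_of_ker_eq _ _ h))]
    simp [RingHom.mem_ker]
  · simp [hnorm, (Fact.out : p.Prime).ne_zero]
  · simp [hnorm, map_prod, absNorm_ker, hι]

theorem exists_eq_ker_of_natCast_mem {ι : Type*} [Fintype ι] {p : ℕ} [Fact p.Prime]
    {φ : ι → (R →+* ZMod p)} (hφ : Function.Injective φ) (hι : Fintype.card ι = finrank ℤ R)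
    {P : Ideal R} [P.IsPrime] (hpP : (p : R) ∈ P) : ∃ i, P = RingHom.ker (φ i) := by
  rw [← Ideal.span_singleton_le_iff_mem, ← prod_ker_eq_span hφ hι, Ideal.IsPrime.prod_le ‹_›] at hpP
  obtain ⟨i, -, hi⟩ := hpP
  have := RingHom.ker_isMaximal_of_surjective _ (ZMod.ringHom_surjective (φ i))
  exact ⟨i, (this.eq_of_le Ideal.IsPrime.ne_top' hi).symm⟩

theorem prod_kerClass_eq_one {ι : Type*} [Fintype ι] {p : ℕ} [Fact p.Prime]
    {φ : ι → (R →+* ZMod p)} (hφ : Function.Injective φ) (hι : Fintype.card ι = finrank ℤ R) :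
    ∏ i, kerClass (φ i) = 1 := by
  simp only [kerClass, ← map_prod]
  rw [ClassGroup.mk0_eq_one_iff]
  refine ⟨(p : R), ?_⟩
  rw [Submonoid.coe_finsetProd]
  exact prod_ker_eq_span hφ hι

end Dedekind

/-! ### Class groups of Galois number fields -/

section NumberField

variable {K : Type*} [Field K] [NumberField K]

theorem exists_basis_and_discr_eq_of_discr_eq_prime_sq {ι : Type*} [Fintype ι] [DecidableEq ι]
    {v : ι → 𝓞 K} {p : ℕ} (hp : p.Prime) (hv : Algebra.discr ℤ v = p ^ 2)
    (hι : Fintype.card ι = finrank ℚ K) (hK : 1 < finrank ℚ K) :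
    (∃ e : Basis ι ℤ (𝓞 K), ⇑e = v) ∧ discr K = p ^ 2 := by
  let b : Basis ι ℤ (𝓞 K) := (RingOfIntegers.basis K).reindex (Fintype.equivOfCardEq (by
    rw [← finrank_eq_card_chooseBasisIndex, RingOfIntegers.rank, hι]))
  have hdiscr : b.det v ^ 2 * discr K = p ^ 2 := by
    rw [← hv, ← discr_eq_discr K b, Basis.det_apply, ← Algebra.discr_of_matrix_vecMul]
    congr 1
    ext1 i
    simp [← b.sum_toMatrix_smul_self v i, Matrix.vecMul, dotProduct, Algebra.smul_def, mul_comm]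
  have hdvd : (b.det v).natAbs ∣ p := (Nat.pow_dvd_pow_iff two_ne_zero).mp (by
    simpa [Int.natAbs_pow] using Int.natAbs_dvd_natAbs.mpr (Dvd.intro _ hdiscr))
  have hdet : (b.det v).natAbs = 1 := by
    refine ((Nat.dvd_prime hp).mp hdvd).resolve_right fun h => ?_
    have h1 : discr K = 1 := by
      rw [← Int.natAbs_sq, h] at hdiscr
      exact (mul_eq_left₀ (by simp [hp.ne_zero])).mp hdiscr
    simpa [h1] using abs_discr_gt_two hK
  obtain ⟨hli, hspan⟩ := b.is_basis_iff_det.mpr (Int.isUnit_iff_natAbs_eq.mpr hdet)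
  refine ⟨⟨Basis.mk hli hspan.ge, Basis.coe_mk _ _⟩, ?_⟩
  simpa [← Int.natAbs_sq, hdet] using hdiscr

theorem nrComplexPlaces_eq_zero_of_odd [IsGalois ℚ K] (h : Odd (finrank ℚ K)) :
    InfinitePlace.nrComplexPlaces K = 0 := by
  have := IsUnramifiedAtInfinitePlaces_of_odd_finrank h
  have h1 := IsUnramifiedAtInfinitePlaces.card_infinitePlace ℚ K
  have h2 := InfinitePlace.card_eq_nrRealPlaces_add_nrComplexPlaces K
  have h3 := InfinitePlace.card_add_two_mul_card_eq_rank K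
  rw [show Fintype.card (InfinitePlace ℚ) = 1 by simp] at h1
  omega

theorem exists_absNorm_eq_or_eq_span [IsGalois ℚ K] (hK : (finrank ℚ K).Prime) {P : Ideal (𝓞 K)}
    [P.IsPrime] (hP : P ≠ ⊥) :
    ∃ p : ℕ, p.Prime ∧ (Ideal.absNorm P = p ∨ P = Ideal.span {(p : 𝓞 K)}) := by
  have : NeZero P := ⟨hP⟩
  set p := Ideal.absNorm (P.under ℤ)
  have hp : p.Prime := Nat.absNorm_under_prime P
  have hmem : (p : 𝓞 K) ∈ P := Int.absNorm_under_mem P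
  have := Fact.mk hp
  have hf : P.inertiaDeg ℤ ∣ finrank ℚ K := by
    rw [← IsGalois.card_aut_eq_finrank,
      ← Ideal.ncard_primesOver_mul_ramificationIdxIn_mul_inertiaDegIn (Ideal.span {(p : ℤ)}) (𝓞 K)
        Gal(K/ℚ), Ideal.inertiaDegIn_eq_inertiaDeg (Ideal.span {(p : ℤ)}) P Gal(K/ℚ)]
    exact (dvd_mul_left _ _).mul_left _
  refine ⟨p, hp, ((Nat.dvd_prime hK).mp hf).imp (fun h => ?_) fun h => ?_⟩
  · rw [← Ideal.pow_inertiaDeg p P, h, pow_one]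
  · have hnorm : Ideal.absNorm (Ideal.span {(p : 𝓞 K)}) = p ^ finrank ℚ K := by
      rw [Ideal.absNorm_span_natCast, RingOfIntegers.rank]
    refine eq_of_dvd_of_absNorm_eq (Ideal.dvd_iff_le.mpr ?_) ?_ ?_
    · rwa [Ideal.span_singleton_le_iff_mem]
    · simp [hnorm, hp.ne_zero]
    · rw [hnorm, ← Ideal.pow_inertiaDeg p P, h]

theorem exists_norm_eq_mem_of_norm_mem [IsGalois ℚ K] {P : Ideal (𝓞 K)} [P.IsPrime] {x : 𝓞 K}
    (hx : (Algebra.norm ℤ x : 𝓞 K) ∈ P) : ∃ y ∈ P, Algebra.norm ℤ y = Algebra.norm ℤ x := by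
  have hprod : (Algebra.norm ℤ x : 𝓞 K) = ∏ σ : Gal(K/ℚ), RingOfIntegers.mapAlgEquiv σ x := by
    refine RingOfIntegers.ext ?_
    change algebraMap (𝓞 K) K _ = algebraMap (𝓞 K) K _
    rw [map_intCast, map_prod, ← map_intCast (algebraMap ℚ K), Algebra.coe_norm_int]
    exact Algebra.norm_eq_prod_automorphisms ℚ (x : K)
  rw [hprod, Ideal.IsPrime.prod_mem_iff] at hx
  obtain ⟨σ, -, hσ⟩ := hx
  refine ⟨_, hσ, Int.cast_injective (α := ℚ) ?_⟩
  rw [Algebra.coe_norm_int, Algebra.coe_norm_int]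
  exact Algebra.norm_eq_of_algEquiv σ (x : K)

theorem mk0_mem_of_norm_eq [IsGalois ℚ K] {H : Subgroup (ClassGroup (𝓞 K))} {p q k : ℕ}
    (hp : p.Prime) (hq : q.Prime)
    (hH : ∀ Q : (Ideal (𝓞 K))⁰, (Q : Ideal (𝓞 K)).IsPrime → (q : 𝓞 K) ∈ (Q : Ideal (𝓞 K)) →
      ClassGroup.mk0 Q ∈ H)
    {x : 𝓞 K} (hx : (Algebra.norm ℤ x).natAbs = p * q ^ k) (P : (Ideal (𝓞 K))⁰)
    (hP : Ideal.absNorm (P : Ideal (𝓞 K)) = p) : ClassGroup.mk0 P ∈ H := by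
  have : (P : Ideal (𝓞 K)).IsPrime := Ideal.isPrime_of_irreducible_absNorm (by rwa [hP])
  have hpP : (p : 𝓞 K) ∈ (P : Ideal (𝓞 K)) := hP ▸ Ideal.absNorm_mem (P : Ideal (𝓞 K))
  obtain ⟨y, hy, hyx⟩ : ∃ y ∈ (P : Ideal (𝓞 K)), Algebra.norm ℤ y = Algebra.norm ℤ x := by
    refine exists_norm_eq_mem_of_norm_mem ?_
    obtain ⟨n, hn⟩ : (p : ℤ) ∣ Algebra.norm ℤ x := Int.natCast_dvd.mpr (Dvd.intro _ hx.symm)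
    rw [hn]
    push_cast
    exact Ideal.mul_mem_right _ _ hpP
  have hy0 : y ≠ 0 := by
    rintro rfl
    simp [← hyx, hp.ne_zero, hq.ne_zero] at hx
  obtain ⟨J, hJ⟩ := Ideal.dvd_span_singleton.mpr hy
  have hJ0 : J ≠ ⊥ := by rintro rfl; simp [hy0] at hJ
  have hJnorm : Ideal.absNorm J = q ^ k := by
    have := congrArg Ideal.absNorm hJ
    rw [Ideal.absNorm_span_singleton, hyx, hx, map_mul, hP] at this
    exact (Nat.eq_of_mul_eq_mul_left hp.pos this).symm
  have hJH : ClassGroup.mk0 ⟨J, mem_nonZeroDivisors_of_ne_zero hJ0⟩ ∈ H :=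
    mk0_mem_of_forall_isPrime _ fun Q hQ hJQ => hH Q hQ (hQ.mem_of_pow_mem k (by
      exact_mod_cast hJnorm ▸ hJQ (Ideal.absNorm_mem J)))
  have hmul : ClassGroup.mk0 P * ClassGroup.mk0 ⟨J, mem_nonZeroDivisors_of_ne_zero hJ0⟩ = 1 := by
    rw [← map_mul, ClassGroup.mk0_eq_one_iff]
    exact ⟨y, hJ.symm⟩
  rw [eq_inv_of_mul_eq_one_left hmul]
  exact inv_mem hJH

open Classical in
theorem eq_top_of_forall_absNorm_le {H : Subgroup (ClassGroup (𝓞 K))}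
    (hH : ∀ P : (Ideal (𝓞 K))⁰, (P : Ideal (𝓞 K)).IsPrime →
      Ideal.absNorm (P : Ideal (𝓞 K)) ≤ (4 / Real.pi) ^ InfinitePlace.nrComplexPlaces K *
        ((finrank ℚ K).factorial / finrank ℚ K ^ finrank ℚ K * √|discr K|) →
      ClassGroup.mk0 P ∈ H) : H = ⊤ := by
  refine eq_top_iff.mpr fun C _ => ?_
  obtain ⟨I, rfl, hI⟩ := exists_ideal_in_class_of_norm_le C
  refine mk0_mem_of_forall_isPrime I fun P hP hIP => hH P hP (le_trans ?_ hI)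
  exact_mod_cast Nat.le_of_dvd (Ideal.absNorm_pos_of_nonZeroDivisors I)
    (Ideal.absNorm_dvd_absNorm_of_le hIP)

end NumberField

/-! ### Norm and trace from the minimal polynomial -/

section Charpoly

variable {R S : Type*} [CommRing R] [IsDomain R] [IsIntegrallyClosed R] [CommRing S] [IsDomain S]
  [Algebra R S] [Module.Finite R S] [Module.Free R S] {f : R[X]} {x : S}

theorem charpoly_lmul_eq_of_irreducible (hf : f.Monic) (hirr : Irreducible f)
    (hx : aeval x f = 0) (hdeg : f.natDegree = finrank R S) :
    (Algebra.lmul R S x).charpoly = f := by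
  have hint : IsIntegral R x := ⟨f, hf, hx⟩
  have hmin : minpoly R x = f := eq_of_monic_of_associated (minpoly.monic hint) hf
    ((minpoly.prime_of_isIntegrallyClosed hint).irreducible.associated_of_dvd hirr
      (minpoly.isIntegrallyClosed_dvd hint hx))
  refine eq_of_monic_of_dvd_of_natDegree_le hf (LinearMap.charpoly_monic _) ?_ ?_
  · rw [← hmin]
    exact minpoly.isIntegrallyClosed_dvd hint (Algebra.aeval_self_charpoly_lmul x)
  · rw [LinearMap.charpoly_natDegree, hdeg]

theorem norm_algebraMap_sub_eq_eval (hf : f.Monic) (hirr : Irreducible f)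
    (hx : aeval x f = 0) (hdeg : f.natDegree = finrank R S) (r : R) :
    Algebra.norm R (algebraMap R S r - x) = f.eval r := by
  rw [← charpoly_lmul_eq_of_irreducible hf hirr hx hdeg, LinearMap.eval_charpoly,
    Algebra.norm_apply, map_sub, AlgHom.commutes]

theorem trace_eq_neg_nextCoeff (hf : f.Monic) (hirr : Irreducible f)
    (hx : aeval x f = 0) (hdeg : f.natDegree = finrank R S) :
    Algebra.trace R S x = -f.nextCoeff := by
  rw [Algebra.trace_apply, LinearMap.trace_eq_matrix_trace R (Free.chooseBasis R S),
    Matrix.trace_eq_neg_charpoly_nextCoeff, ← LinearMap.charpoly_def,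
    ← charpoly_lmul_eq_of_irreducible hf hirr hx hdeg]

end Charpoly

/-! ### Gaussian periods of finite fields -/

section GaussPeriod
open Finset

theorem ne_zero_of_pow_eq_one {M : Type*} [MonoidWithZero M] [Nontrivial M] {m : ℕ} (hm : m ≠ 0)
    {t : M} (ht : t ^ m = 1) : t ≠ 0 := by
  rintro rfl
  exact zero_ne_one ((zero_pow hm).symm.trans ht)

variable {k R : Type*} [Field k] [Fintype k] [DecidableEq k] [CommRing R]

/-- The Gaussian period `∑ ψ (c * t)` over the `m`-th roots of unity `t` of the finite field `k`. -/
def gaussPeriod (m : ℕ) (ψ : AddChar k R) (c : k) : R :=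
  ∑ t with t ^ m = 1, ψ (c * t)

variable {m : ℕ} {ψ : AddChar k R}

theorem sum_comp_mul_of_pow_eq_one {M : Type*} [AddCommMonoid M] (hm : m ≠ 0) (f : k → M)
    {u : k} (hu : u ^ m = 1) :
    ∑ t with t ^ m = 1, f (u * t) = ∑ t with t ^ m = 1, f t :=
  Finset.sum_equiv (Equiv.mulLeft₀ u (ne_zero_of_pow_eq_one hm hu))
    (fun t => by simp [mul_pow, hu]) (fun _ _ => rfl)

theorem gaussPeriod_mul_of_pow_eq_one (hm : m ≠ 0) (c : k) {u : k} (hu : u ^ m = 1) :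
    gaussPeriod m ψ (u * c) = gaussPeriod m ψ c := by
  simp only [gaussPeriod, mul_assoc, mul_left_comm u c]
  exact sum_comp_mul_of_pow_eq_one hm (fun t => ψ (c * t)) hu

theorem gaussPeriod_eq_of_pow_eq (hm : m ≠ 0) {x y : k} (h : x ^ m = y ^ m) :
    gaussPeriod m ψ x = gaussPeriod m ψ y := by
  rcases eq_or_ne y 0 with rfl | hy
  · rw [zero_pow hm, pow_eq_zero_iff hm] at h
    rw [h]
  · have hu : (x / y) ^ m = 1 := by rw [div_pow, h, div_self (pow_ne_zero m hy)]
    rw [← gaussPeriod_mul_of_pow_eq_one hm y hu, div_mul_cancel₀ x hy]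

theorem gaussPeriod_zero : gaussPeriod m ψ 0 = #{t : k | t ^ m = 1} := by
  simp [gaussPeriod]

theorem gaussPeriod_mul_gaussPeriod (hm : m ≠ 0) (c d : k) :
    gaussPeriod m ψ c * gaussPeriod m ψ d = ∑ t with t ^ m = 1, gaussPeriod m ψ (c + d * t) := by
  calc gaussPeriod m ψ c * gaussPeriod m ψ d
      = ∑ s with s ^ m = 1, ∑ t with t ^ m = 1, ψ (c * s + d * t) := by
        simp only [gaussPeriod, sum_mul_sum, AddChar.map_add_eq_mul]
    _ = ∑ s with s ^ m = 1, ∑ t with t ^ m = 1, ψ (c * s + d * (s * t)) :=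
        sum_congr rfl fun s hs => (sum_comp_mul_of_pow_eq_one hm
          (fun t => ψ (c * s + d * t)) (mem_filter.mp hs).2).symm
    _ = ∑ t with t ^ m = 1, ∑ s with s ^ m = 1, ψ (c * s + d * (s * t)) := sum_comm
    _ = ∑ t with t ^ m = 1, gaussPeriod m ψ (c + d * t) := by
        refine sum_congr rfl fun t _ => sum_congr rfl fun s _ => ?_
        rw [add_mul, mul_assoc, mul_comm s t]

theorem sum_gaussPeriod_eq_zero [IsDomain R] (hm : m ≠ 0) (hψ : ψ ≠ 1) :
    ∑ x, gaussPeriod m ψ x = 0 := by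
  simp only [gaussPeriod]
  rw [sum_comm]
  refine sum_eq_zero fun t ht => ?_
  rw [← AddChar.sum_eq_zero_of_ne_one hψ]
  exact Fintype.sum_equiv
    (Equiv.mulRight₀ t (ne_zero_of_pow_eq_one hm (mem_filter.mp ht).2)) _ _ fun _ => rfl

theorem sum_gaussPeriod_eq_sum_card_mul {ι α : Type*} [Fintype ι] (hm : m ≠ 0) {r : ι → k}
    (hr : Function.Injective fun i => r i ^ m) (hr' : ∀ x, ∃ i, x ^ m = r i ^ m)
    (T : Finset α) (f : α → k) :
    ∑ s ∈ T, gaussPeriod m ψ (f s) =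
      ∑ i, (#{s ∈ T | f s ^ m = r i ^ m} : R) * gaussPeriod m ψ (r i) := by
  classical
  have hrep (x : k) :
      gaussPeriod m ψ x = ∑ i, if x ^ m = r i ^ m then gaussPeriod m ψ (r i) else 0 := by
    obtain ⟨i, hi⟩ := hr' x
    simp only [hi, hr.eq_iff, gaussPeriod_eq_of_pow_eq hm hi, sum_ite_eq, mem_univ, if_true]
  calc ∑ s ∈ T, gaussPeriod m ψ (f s)
      = ∑ s ∈ T, ∑ i, if f s ^ m = r i ^ m then gaussPeriod m ψ (r i) else 0 :=
        sum_congr rfl fun s _ => hrep (f s)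
    _ = ∑ i, (#{s ∈ T | f s ^ m = r i ^ m} : R) * gaussPeriod m ψ (r i) := by
        rw [sum_comm]
        simp only [← sum_filter, sum_const, nsmul_eq_mul]

theorem isIntegral_gaussPeriod (c : k) : IsIntegral ℤ (gaussPeriod m ψ c) := by
  refine IsIntegral.sum _ fun t _ => .of_pow (Fintype.card_pos (α := k)) ?_
  rw [← AddChar.map_nsmul_eq_pow, card_nsmul_eq_zero, AddChar.map_zero_eq_one]
  exact isIntegral_one

end GaussPeriod

section Galois

variable {K F : Type*} [Field K] [Field F] [Algebra K F] {p : ℕ} [Fact p.Prime] {ζ : F}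

theorem algEquiv_gaussPeriod_eq (hζ : IsPrimitiveRoot ζ p) {m : ℕ} (hm : m ≠ 0) {σ : F ≃ₐ[K] F}
    (hσ : σ ^ m = 1) (c : ZMod p) :
    σ (gaussPeriod m (AddChar.zmodChar p hζ.pow_eq_one) c) =
      gaussPeriod m (AddChar.zmodChar p hζ.pow_eq_one) c := by
  let u : (ZMod p)ˣ := hζ.autToPow K σ
  have hu : (u : ZMod p) ^ m = 1 := by
    rw [← Units.val_pow_eq_pow_val, ← map_pow, hσ, map_one, Units.val_one]
  have hσψ (x : ZMod p) : σ (AddChar.zmodChar p hζ.pow_eq_one x) =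
      AddChar.zmodChar p hζ.pow_eq_one (u * x) := by
    rw [← ZMod.natCast_zmod_val x, AddChar.zmodChar_apply', map_pow, ← hζ.autToPow_spec K σ,
      ← pow_mul, ← AddChar.zmodChar_apply' hζ.pow_eq_one]
    simp [u]
  refine Eq.trans ?_ (gaussPeriod_mul_of_pow_eq_one hm c hu)
  simp only [gaussPeriod, map_sum, hσψ, mul_assoc]

theorem gaussPeriod_mem [FiniteDimensional K F] [IsGalois K F] (hζ : IsPrimitiveRoot ζ p)
    (L : IntermediateField K F) (c : ZMod p) :
    gaussPeriod (finrank L F) (AddChar.zmodChar p hζ.pow_eq_one) c ∈ L := by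
  rw [← IsGalois.fixedField_fixingSubgroup L, IntermediateField.mem_fixedField_iff,
    IsGalois.fixedField_fixingSubgroup L]
  intro σ hσ
  refine algEquiv_gaussPeriod_eq hζ finrank_pos.ne' ?_ c
  rw [← IsGalois.card_fixingSubgroup_eq_finrank L]
  exact congrArg Subtype.val (pow_card_eq_one' (x := (⟨σ, hσ⟩ : L.fixingSubgroup)))

end Galois

/-! ### The cubic field of conductor 277 -/

instance : Fact (Nat.Prime 13) := ⟨by norm_num⟩

instance : Fact (Nat.Prime 19) := ⟨by norm_num⟩

instance : Fact (Nat.Prime 37) := ⟨by norm_num⟩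

instance : Fact (Nat.Prime 61) := ⟨by norm_num⟩

instance : Fact (Nat.Prime 277) := ⟨by norm_num⟩

/-- The minimal polynomial of a cubic Gaussian period of conductor `277`. -/
noncomputable def periodPoly : ℤ[X] := X ^ 3 + X ^ 2 - 92 * X + 236

theorem monic_periodPoly : periodPoly.Monic := by unfold periodPoly; monicity!

theorem natDegree_periodPoly : periodPoly.natDegree = 3 := by unfold periodPoly; compute_degree!

theorem irreducible_periodPoly : Irreducible periodPoly := by
  have hroot : ∀ x : ZMod 3, x ^ 3 + x ^ 2 - 92 * x + 236 ≠ 0 := by decide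
  have := Fact.mk Nat.prime_three
  refine monic_periodPoly.irreducible_of_irreducible_map (Int.castRingHom (ZMod 3)) _ ?_
  have hdeg := (monic_periodPoly.natDegree_map (Int.castRingHom (ZMod 3))).trans
    natDegree_periodPoly
  rw [(monic_periodPoly.map _).irreducible_iff_roots_eq_zero_of_degree_le_three (by lia) (by lia),
    Multiset.eq_zero_iff_forall_notMem]
  intro x hx
  exact hroot x (by simpa [periodPoly] using isRoot_of_mem_roots hx)

theorem exists_natAbs_eval_periodPoly_eq {p : ℕ} (hp : p.Prime) (hlt : p < 62) {r : ZMod p}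
    (hr : aeval r periodPoly = 0) :
    ∃ (n : ℤ) (k : ℕ), (periodPoly.eval n).natAbs = p * 2 ^ k := by
  have heval (n : ℤ) : periodPoly.eval n = n ^ 3 + n ^ 2 - 92 * n + 236 := by simp [periodPoly]
  have hroot : r ^ 3 + r ^ 2 - 92 * r + 236 = 0 := by simpa [periodPoly, map_ofNat] using hr
  clear hr
  simp only [heval]
  have hmem : p ∈ ({2, 13, 19, 37, 41, 59, 61} : Finset ℕ) := by
    interval_cases p <;> first | decide | (revert hp; decide) | (revert r; decide)
  fin_cases hmem
  · exact ⟨3, 1, rfl⟩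
  · exact ⟨4, 2, rfl⟩
  · exact ⟨-11, 1, rfl⟩
  · exact ⟨5, 1, rfl⟩
  · exact ⟨-1, 3, rfl⟩
  · exact ⟨0, 2, rfl⟩
  · exact ⟨-12, 2, rfl⟩

/-- The relations between the cubic Gaussian periods `a = η₁` and `b = η₅` of conductor `277`; the
third period is `η₂₅ = -1 - a - b`. The three equations are the multiplication table of
`ℤ[a, b] = ℤ ⊕ ℤ a ⊕ ℤ b`, so pairs in an arbitrary ring describe the ring homomorphisms
out of it. -/
structure IsPeriodPair {R : Type*} [CommRing R] (a b : R) : Prop where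
  mul_self_left : a * a = 62 - 3 * a + 4 * b
  mul : a * b = -28 + 6 * a + 2 * b
  mul_self_right : b * b = 58 - 4 * a - 7 * b

namespace IsPeriodPair

section CommRing

variable {R S : Type*} [CommRing R] [CommRing S] {a b : R}

theorem rotate (h : IsPeriodPair a b) : IsPeriodPair b (-1 - a - b) where
  mul_self_left := by linear_combination h.mul_self_right
  mul := by linear_combination -h.mul - h.mul_self_right
  mul_self_right := by linear_combination h.mul_self_left + 2 * h.mul + h.mul_self_right

theorem of_map {f : R →+* S} (hf : Function.Injective f) (h : IsPeriodPair (f a) (f b)) :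
    IsPeriodPair a b where
  mul_self_left := hf (by simpa [map_ofNat] using h.mul_self_left)
  mul := hf (by simpa [map_ofNat] using h.mul)
  mul_self_right := hf (by simpa [map_ofNat] using h.mul_self_right)

theorem aeval_periodPoly (h : IsPeriodPair a b) : aeval a periodPoly = 0 := by
  simp only [periodPoly, map_add, map_sub, map_mul, map_pow, aeval_X, map_ofNat]
  linear_combination (a - 2) * h.mul_self_left + 4 * h.mul

theorem isUnit_twentyOne_sub_two_mul_sub_six_mul (h : IsPeriodPair a b) :
    IsUnit (21 - 2 * a - 6 * b) :=
  .of_mul_eq_one (-291 + 46 * a - 14 * b) (by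
    linear_combination (-92) * h.mul_self_left - 248 * h.mul + 84 * h.mul_self_right)

theorem isUnit_twentyThree_sub_four_mul_add_two_mul (h : IsPeriodPair a b) :
    IsUnit (23 - 4 * a + 2 * b) :=
  .of_mul_eq_one (-337 - 60 * a - 46 * b) (by
    linear_combination 240 * h.mul_self_left + 64 * h.mul - 92 * h.mul_self_right)

theorem map (h : IsPeriodPair a b) (f : R →+* S) : IsPeriodPair (f a) (f b) where
  mul_self_left := by simpa [map_ofNat] using congrArg f h.mul_self_left
  mul := by simpa [map_ofNat] using congrArg f h.mul
  mul_self_right := by simpa [map_ofNat] using congrArg f h.mul_self_right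

theorem right_eq_zero_of_left_eq_one {r s : ZMod 2} (h : IsPeriodPair r s) (hr : r = 1) :
    s = 0 := by
  have hmul := h.mul
  clear h
  revert r s
  decide

end CommRing

section NumberField

variable {K : Type*} [Field K] [NumberField K] {a b : 𝓞 K}

theorem norm_intCast_sub (h : IsPeriodPair a b) (hK : finrank ℚ K = 3) (n : ℤ) :
    Algebra.norm ℤ (n - a) = periodPoly.eval n := by
  simpa using norm_algebraMap_sub_eq_eval monic_periodPoly irreducible_periodPoly
    h.aeval_periodPoly (by rw [natDegree_periodPoly, RingOfIntegers.rank, hK]) n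

theorem trace_left (h : IsPeriodPair a b) (hK : finrank ℚ K = 3) :
    Algebra.trace ℤ (𝓞 K) a = -1 := by
  rw [trace_eq_neg_nextCoeff monic_periodPoly irreducible_periodPoly h.aeval_periodPoly
    (by rw [natDegree_periodPoly, RingOfIntegers.rank, hK]),
    nextCoeff_of_natDegree_pos (by simp [natDegree_periodPoly]), natDegree_periodPoly]
  simp [periodPoly, coeff_X]

theorem trace_linear (h : IsPeriodPair a b) (hK : finrank ℚ K = 3) (x y z : ℤ) :
    Algebra.trace ℤ (𝓞 K) (x + y * a + z * b) = 3 * x - y - z := by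
  have hx : Algebra.trace ℤ (𝓞 K) x = 3 * x := by
    simpa [RingOfIntegers.rank, hK] using Algebra.trace_algebraMap (S := 𝓞 K) x
  rw [← zsmul_eq_mul, ← zsmul_eq_mul, map_add, map_add, map_zsmul, map_zsmul, hx, h.trace_left hK,
    h.rotate.trace_left hK]
  simp only [smul_eq_mul]
  ring

theorem discr_eq (h : IsPeriodPair a b) (hK : finrank ℚ K = 3) :
    Algebra.discr ℤ ![1, a, b] = 277 ^ 2 := by
  have htr := h.trace_linear hK
  have h1 : Algebra.trace ℤ (𝓞 K) 1 = 3 := by simpa using htr 1 0 0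
  have ha : Algebra.trace ℤ (𝓞 K) a = -1 := by simpa using htr 0 1 0
  have hb : Algebra.trace ℤ (𝓞 K) b = -1 := by simpa using htr 0 0 1
  have haa : Algebra.trace ℤ (𝓞 K) (a * a) = 185 := by
    simpa [h.mul_self_left, sub_eq_add_neg] using htr 62 (-3) 4
  have hab : Algebra.trace ℤ (𝓞 K) (a * b) = -92 := by simpa [h.mul] using htr (-28) 6 2
  have hbb : Algebra.trace ℤ (𝓞 K) (b * b) = 185 := by
    simpa [h.mul_self_right, sub_eq_add_neg] using htr 58 (-4) (-7)
  simp [Algebra.discr_def, Matrix.det_fin_three, Algebra.traceMatrix_apply,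
    Algebra.traceForm_apply, h1, ha, hb, haa, hab, hbb, mul_comm b a]

theorem exists_basis_and_discr_eq (h : IsPeriodPair a b) (hK : finrank ℚ K = 3) :
    (∃ e : Basis (Fin 3) ℤ (𝓞 K), ⇑e = ![1, a, b]) ∧ discr K = 277 ^ 2 := by
  exact_mod_cast exists_basis_and_discr_eq_of_discr_eq_prime_sq (p := 277) (by norm_num)
    (by exact_mod_cast h.discr_eq hK) (by simp [hK]) (by simp [hK])

theorem exists_ringHom {R : Type*} [CommRing R] {r s : R} (h : IsPeriodPair a b)
    (hK : finrank ℚ K = 3) (h' : IsPeriodPair r s) : ∃ φ : 𝓞 K →+* R, φ a = r ∧ φ b = s := by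
  obtain ⟨e, he⟩ := (h.exists_basis_and_discr_eq hK).1
  let f : 𝓞 K →ₗ[ℤ] R := e.constr ℤ ![1, r, s]
  have he0 : e 0 = 1 := by simp [he]
  have he1 : e 1 = a := by simp [he]
  have he2 : e 2 = b := by simp [he]
  have h1 : f 1 = 1 := by rw [← he0, e.constr_basis]; rfl
  have ha : f a = r := by rw [← he1, e.constr_basis]; rfl
  have hb : f b = s := by rw [← he2, e.constr_basis]; rfl
  have hlin (x y z : ℤ) : f (x + y * a + z * b) = x + y * r + z * s := by
    rw [← mul_one (x : 𝓞 K)]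
    simp only [← zsmul_eq_mul, map_add, map_zsmul, h1, ha, hb]
    simp
  have haa : f (a * a) = r * r := by
    simpa [h.mul_self_left, h'.mul_self_left, sub_eq_add_neg] using hlin 62 (-3) 4
  have hab : f (a * b) = r * s := by simpa [h.mul, h'.mul] using hlin (-28) 6 2
  have hbb : f (b * b) = s * s := by
    simpa [h.mul_self_right, h'.mul_self_right, sub_eq_add_neg] using hlin 58 (-4) (-7)
  have hmul : (LinearMap.mul ℤ (𝓞 K)).compr₂ f = (LinearMap.mul ℤ R).compl₁₂ f f :=
    e.ext fun i => e.ext fun j => by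
      fin_cases i <;> fin_cases j <;>
        simp [he, h1, ha, hb, haa, hab, hbb, mul_comm b a, mul_comm s r]
  exact ⟨(AlgHom.ofLinearMap f h1 (LinearMap.map_mul_iff f |>.mpr hmul)).toRingHom, ha, hb⟩

theorem ringHom_ext {R : Type*} [CommRing R] (h : IsPeriodPair a b) (hK : finrank ℚ K = 3)
    {φ ψ : 𝓞 K →+* R} (ha : φ a = ψ a) (hb : φ b = ψ b) : φ = ψ := by
  obtain ⟨e, he⟩ := (h.exists_basis_and_discr_eq hK).1
  have := e.ext (f₁ := φ.toAddMonoidHom.toIntLinearMap) (f₂ := ψ.toAddMonoidHom.toIntLinearMap)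
    fun i => by fin_cases i <;> simp [he, ha, hb]
  exact RingHom.ext fun x => LinearMap.congr_fun this x

theorem exists_quadraticChar (h : IsPeriodPair a b) (hK : finrank ℚ K = 3) {q : ℕ}
    [Fact q.Prime] {r s : ZMod q} (h' : IsPeriodPair r s) : ∃ χ : 𝓞 K →* ℤ, ∀ x y z : ℤ,
      χ (x + y * a + z * b) = quadraticChar (ZMod q) (x + y * r + z * s) := by
  obtain ⟨φ, rfl, rfl⟩ := h.exists_ringHom hK h'
  exact ⟨(quadraticChar (ZMod q)).toMonoidHom.comp φ, fun x y z => by simp⟩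

theorem exists_quadraticChars (h : IsPeriodPair a b) (hK : finrank ℚ K = 3) :
    ∃ χ : Fin 4 → 𝓞 K →* ℤ, ∀ i j,
      χ i (![-1, 21 - 2 * a - 6 * b, 23 - 4 * a + 2 * b, a - 3] j) = if i = j then -1 else 1 := by
  -- The `(r, s)` are the reductions of `(a, b)` modulo primes above `19, 37, 61, 13`, each chosen
  -- so that only one of the four elements is a non-residue.
  obtain ⟨χ₁, h₁⟩ := h.exists_quadraticChar hK (q := 19) (r := 8) (s := 16)
    ⟨by decide, by decide, by decide⟩
  obtain ⟨χ₂, h₂⟩ := h.exists_quadraticChar hK (q := 37) (r := 13) (s := 18)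
    ⟨by decide, by decide, by decide⟩
  obtain ⟨χ₃, h₃⟩ := h.exists_quadraticChar hK (q := 61) (r := 42) (s := 30)
    ⟨by decide, by decide, by decide⟩
  obtain ⟨χ₄, h₄⟩ := h.exists_quadraticChar hK (q := 13) (r := 10) (s := 4)
    ⟨by decide, by decide, by decide⟩
  let x : Fin 4 → ℤ := ![-1, 21, 23, -3]
  let y : Fin 4 → ℤ := ![0, -2, -4, 1]
  let z : Fin 4 → ℤ := ![0, -6, 2, 0]
  have hcoord (j : Fin 4) : ![-1, 21 - 2 * a - 6 * b, 23 - 4 * a + 2 * b, a - 3] j =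
      x j + y j * a + z j * b := by
    fin_cases j <;> simp [x, y, z] <;> ring
  refine ⟨![χ₁, χ₂, χ₃, χ₄], fun i j => ?_⟩
  rw [hcoord]
  match i with
  | 0 => exact (h₁ _ _ _).trans (by revert j; decide)
  | 1 => exact (h₂ _ _ _).trans (by revert j; decide)
  | 2 => exact (h₃ _ _ _).trans (by revert j; decide)
  | 3 => exact (h₄ _ _ _).trans (by revert j; decide)

theorem not_associated_sq (h : IsPeriodPair a b) (hK : finrank ℚ K = 3) (c : 𝓞 K) :
    ¬ Associated (c ^ 2) (a - 3) := by
  have hrank : Units.rank K + 1 < Fintype.card (Fin 4) := by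
    have h1 := InfinitePlace.card_add_two_mul_card_eq_rank K
    have h2 := InfinitePlace.card_eq_nrRealPlaces_add_nrComplexPlaces K
    rw [Units.rank, Fintype.card_fin]
    lia
  have hunit {u : 𝓞 K} (hu : IsUnit u) : Associated (1 ^ 2) u := by
    simpa using (associated_one_iff_isUnit.mpr hu).symm
  obtain ⟨χ, hχ⟩ := h.exists_quadraticChars hK
  obtain ⟨j, hj⟩ := exists_forall_not_associated_sq hrank χ _ hχ
  match j with
  | 0 => exact absurd (hunit isUnit_one.neg) (hj 1)
  | 1 => exact absurd (hunit h.isUnit_twentyOne_sub_two_mul_sub_six_mul) (hj 1)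
  | 2 => exact absurd (hunit h.isUnit_twentyThree_sub_four_mul_add_two_mul) (hj 1)
  | 3 => exact hj c

theorem exists_ringHoms_zmod_two (h : IsPeriodPair a b) (hK : finrank ℚ K = 3) :
    ∃ φ : Fin 3 → (𝓞 K →+* ZMod 2), Function.Injective φ ∧
      φ 0 a = 1 ∧ φ 1 b = 1 ∧ φ 2 (-1 - a - b) = 1 := by
  obtain ⟨φ, ha, -⟩ := h.exists_ringHom hK (R := ZMod 2) (r := 1) (s := 0)
    ⟨by decide, by decide, by decide⟩
  obtain ⟨ψ, ha', hb'⟩ := h.exists_ringHom hK (R := ZMod 2) (r := 0) (s := 1)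
    ⟨by decide, by decide, by decide⟩
  obtain ⟨θ, ha'', hb''⟩ := h.exists_ringHom hK (R := ZMod 2) (r := 0) (s := 0)
    ⟨by decide, by decide, by decide⟩
  refine ⟨![φ, ψ, θ], ?_, ha, hb', by simp [ha'', hb'']⟩
  have h1 : φ ≠ ψ := by rintro rfl; simp_all
  have h2 : φ ≠ θ := by rintro rfl; simp_all
  have h3 : ψ ≠ θ := by rintro rfl; simp_all
  intro i j hij
  fin_cases i <;> fin_cases j <;> simp_all

theorem ker_sq_eq_span (h : IsPeriodPair a b) (hK : finrank ℚ K = 3) {φ : 𝓞 K →+* ZMod 2}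
    (ha : φ a = 1) : RingHom.ker φ ^ 2 = Ideal.span {a - 3} := by
  have hnorm : Ideal.absNorm (Ideal.span {a - 3}) = 2 ^ 2 := by
    rw [← Ideal.span_singleton_neg, neg_sub, Ideal.absNorm_span_singleton]
    simpa [periodPoly] using congrArg Int.natAbs (h.norm_intCast_sub hK 3)
  refine (eq_pow_of_forall_isPrime Nat.prime_two (absNorm_ker φ) hnorm fun P hP hle => ?_).symm
  have h2 : ((2 : ℕ) : 𝓞 K) ∈ P := hP.mem_of_pow_mem 2 (by
    exact_mod_cast hnorm ▸ hle (Ideal.absNorm_mem _))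
  obtain ⟨Φ, hΦ, -⟩ := h.exists_ringHoms_zmod_two hK
  obtain ⟨i, rfl⟩ := exists_eq_ker_of_natCast_mem hΦ (by simp [RingOfIntegers.rank, hK]) h2
  have hi : Φ i a = 1 := by
    have : Φ i a - 3 = 0 := by
      simpa [RingHom.mem_ker, map_ofNat] using (Ideal.span_singleton_le_iff_mem _).mp hle
    exact sub_eq_zero.mp this
  have hib : Φ i b = 0 := (h.map (Φ i)).right_eq_zero_of_left_eq_one hi
  have hb : φ b = 0 := (h.map φ).right_eq_zero_of_left_eq_one ha
  rw [h.ringHom_ext hK (hi.trans ha.symm) (hib.trans hb.symm)]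

theorem kerClass_sq (h : IsPeriodPair a b) (hK : finrank ℚ K = 3) {φ : 𝓞 K →+* ZMod 2}
    (ha : φ a = 1) : kerClass φ ^ 2 = 1 :=
  kerClass_sq_eq_one (h.ker_sq_eq_span hK ha)

theorem kerClass_ne_one (h : IsPeriodPair a b) (hK : finrank ℚ K = 3) {φ : 𝓞 K →+* ZMod 2}
    (ha : φ a = 1) : kerClass φ ≠ 1 := fun hφ =>
  not_isPrincipal_of_sq_eq_span (h.ker_sq_eq_span hK ha) (h.not_associated_sq hK)
    (kerClass_eq_one_iff.mp hφ)

theorem minkowski_bound_lt (h : IsPeriodPair a b) (hK : finrank ℚ K = 3) [IsGalois ℚ K] :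
    (4 / Real.pi) ^ InfinitePlace.nrComplexPlaces K *
        ((finrank ℚ K).factorial / finrank ℚ K ^ finrank ℚ K * √|discr K|) < 62 := by
  rw [nrComplexPlaces_eq_zero_of_odd (by rw [hK]; decide), (h.exists_basis_and_discr_eq hK).2, hK]
  norm_num [Nat.factorial]

theorem eq_top_of_forall_two_mem (h : IsPeriodPair a b) (hK : finrank ℚ K = 3) [IsGalois ℚ K]
    {H : Subgroup (ClassGroup (𝓞 K))}
    (hH : ∀ Q : (Ideal (𝓞 K))⁰, (Q : Ideal (𝓞 K)).IsPrime → (2 : 𝓞 K) ∈ (Q : Ideal (𝓞 K)) →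
      ClassGroup.mk0 Q ∈ H) : H = ⊤ := by
  refine eq_top_of_forall_absNorm_le fun P hP hle => ?_
  obtain ⟨p, hp, hPp | hPp⟩ := exists_absNorm_eq_or_eq_span (by rw [hK]; exact Nat.prime_three)
    (nonZeroDivisors.coe_ne_zero P)
  · have hlt : p < 62 := by exact_mod_cast hPp ▸ hle.trans_lt (h.minkowski_bound_lt hK)
    obtain ⟨φ, -⟩ := exists_ringHom_ker_eq hp hPp
    obtain ⟨n, k, hnk⟩ := exists_natAbs_eval_periodPoly_eq hp hlt (h.map φ).aeval_periodPoly
    rw [← h.norm_intCast_sub hK] at hnk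
    exact mk0_mem_of_norm_eq hp Nat.prime_two (by exact_mod_cast hH) hnk P hPp
  · rw [(ClassGroup.mk0_eq_one_iff _).mpr ⟨_, hPp⟩]
    exact H.one_mem

theorem isKleinFour_classGroup (h : IsPeriodPair a b) (hK : finrank ℚ K = 3) [IsGalois ℚ K] :
    IsKleinFour (ClassGroup (𝓞 K)) := by
  have hcard : Fintype.card (Fin 3) = finrank ℤ (𝓞 K) := by simp [RingOfIntegers.rank, hK]
  obtain ⟨φ, hφ, h0, h1, h2⟩ := h.exists_ringHoms_zmod_two hK
  have hprod : kerClass (φ 0) * kerClass (φ 1) * kerClass (φ 2) = 1 := by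
    simpa [Fin.prod_univ_three] using prod_kerClass_eq_one hφ hcard
  have hsq := h.kerClass_sq hK h0
  refine isKleinFour_of_closure_pair hsq (h.rotate.kerClass_sq hK h1) (h.kerClass_ne_one hK h0)
    (h.rotate.kerClass_ne_one hK h1) (fun heq => ?_) ?_
  · rw [← heq, ← sq, hsq, one_mul] at hprod
    exact h.rotate.rotate.kerClass_ne_one hK h2 hprod
  · have hx : kerClass (φ 0) ∈ Subgroup.closure {kerClass (φ 0), kerClass (φ 1)} :=
      Subgroup.subset_closure (by simp)
    have hy : kerClass (φ 1) ∈ Subgroup.closure {kerClass (φ 0), kerClass (φ 1)} :=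
      Subgroup.subset_closure (by simp)
    refine h.eq_top_of_forall_two_mem hK fun Q hQ hmem => ?_
    obtain ⟨i, hi⟩ := exists_eq_ker_of_natCast_mem hφ hcard (P := Q) (by exact_mod_cast hmem)
    have hQi : ClassGroup.mk0 Q = kerClass (φ i) := congrArg _ (Subtype.ext hi)
    rw [hQi]
    match i with
    | 0 => exact hx
    | 1 => exact hy
    | 2 =>
      rw [← inv_eq_of_mul_eq_one_right hprod]
      exact inv_mem (mul_mem hx hy)

end NumberField

end IsPeriodPair

section
open Finset

variable {R : Type*} [CommRing R] {ψ : AddChar (ZMod 277) R}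

-- `0, 1, 5, 25` represent `0` and the three cosets of the `92`-nd roots of unity in `(ZMod 277)ˣ`.
theorem sum_gaussPeriod_277 {α : Type*} (T : Finset α) (f : α → ZMod 277) {n : Fin 4 → ℕ}
    (hn : ∀ i, #{s ∈ T | f s ^ 92 = ![0, 1, 5, 25] i ^ 92} = n i) :
    ∑ s ∈ T, gaussPeriod 92 ψ (f s) = 92 * n 0 + n 1 * gaussPeriod 92 ψ 1 +
      n 2 * gaussPeriod 92 ψ 5 + n 3 * gaussPeriod 92 ψ 25 := by
  have h0 : gaussPeriod 92 ψ 0 = 92 := by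
    rw [gaussPeriod_zero, show #{t : ZMod 277 | t ^ 92 = 1} = 92 by decide +kernel]
    rfl
  rw [sum_gaussPeriod_eq_sum_card_mul (by norm_num) (r := ![0, 1, 5, 25]) (by decide +kernel)
    (by decide +kernel)]
  simp [Fin.sum_univ_four, ← hn, h0, mul_comm]

theorem isPeriodPair_gaussPeriod [IsDomain R] [CharZero R] (hψ : ψ ≠ 1) :
    IsPeriodPair (gaussPeriod 92 ψ 1) (gaussPeriod 92 ψ 5) := by
  have hsum : 1 + gaussPeriod 92 ψ 1 + gaussPeriod 92 ψ 5 + gaussPeriod 92 ψ 25 = 0 := by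
    have h := sum_gaussPeriod_277 (ψ := ψ) univ id (n := ![1, 92, 92, 92]) (by decide +kernel)
    simp only [id, sum_gaussPeriod_eq_zero (by norm_num : 92 ≠ 0) hψ] at h
    have h92 : (92 : R) ≠ 0 := by norm_num
    refine mul_left_cancel₀ h92 ?_
    simp only [Matrix.cons_val, Nat.cast_one, Nat.cast_ofNat] at h
    linear_combination -h
  have hmul (c d : ZMod 277) {n : Fin 4 → ℕ}
      (hn : ∀ i, #{t ∈ {t : ZMod 277 | t ^ 92 = 1} |
        (c + d * t) ^ 92 = ![0, 1, 5, 25] i ^ 92} = n i) :=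
    (gaussPeriod_mul_gaussPeriod (ψ := ψ) (by norm_num : 92 ≠ 0) c d).trans
      (sum_gaussPeriod_277 _ _ hn)
  refine ⟨?_, ?_, ?_⟩
  · rw [hmul 1 1 (n := ![1, 27, 34, 30]) (by decide +kernel)]
    simp only [Matrix.cons_val, Nat.cast_one, Nat.cast_ofNat]
    linear_combination 30 * hsum
  · rw [hmul 1 5 (n := ![0, 34, 30, 28]) (by decide +kernel)]
    simp only [Matrix.cons_val, Nat.cast_zero, Nat.cast_ofNat]
    linear_combination 28 * hsum
  · rw [hmul 5 5 (n := ![1, 30, 27, 34]) (by decide +kernel)]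
    simp only [Matrix.cons_val, Nat.cast_one, Nat.cast_ofNat]
    linear_combination 34 * hsum

end

section Cyclotomic

variable {F : Type*} [Field F] [NumberField F] [IsCyclotomicExtension {277} ℚ F]
  {L : IntermediateField ℚ F}

theorem finrank_eq_ninetyTwo (hL : finrank ℚ L = 3) : finrank L F = 92 := by
  have hF : finrank ℚ F = 276 := by
    rw [IsCyclotomicExtension.finrank (n := 277) F (cyclotomic.irreducible_rat (by norm_num)),
      Nat.totient_prime Fact.out]
  have := finrank_mul_finrank ℚ L F
  lia

theorem exists_isPeriodPair (hL : finrank ℚ L = 3) : ∃ a b : 𝓞 L, IsPeriodPair a b := by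
  have : IsAbelianGalois ℚ F := IsCyclotomicExtension.isAbelianGalois {277} ℚ F
  have hζ := IsCyclotomicExtension.zeta_spec 277 ℚ F
  let ψ := AddChar.zmodChar 277 hζ.pow_eq_one
  have hψ : ψ ≠ 1 := fun h => hζ.ne_one (by norm_num) (by
    simpa [ψ, AddChar.zmodChar_apply, ZMod.val_one] using DFunLike.congr_fun h 1)
  let f : 𝓞 L →+* F := (algebraMap L F).comp (algebraMap (𝓞 L) L)
  have hf : Function.Injective f := (algebraMap L F).injective.comp RingOfIntegers.coe_injective
  have hlift (c : ZMod 277) : ∃ x, f x = gaussPeriod 92 ψ c := by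
    rw [← finrank_eq_ninetyTwo hL]
    have hint : IsIntegral ℤ (⟨_, gaussPeriod_mem hζ L c⟩ : L) :=
      (isIntegral_algHom_iff (L.val.restrictScalars ℤ) L.val.injective).mp
        (isIntegral_gaussPeriod c)
    exact ⟨⟨_, hint⟩, rfl⟩
  obtain ⟨a, ha⟩ := hlift 1
  obtain ⟨b, hb⟩ := hlift 5
  refine ⟨a, b, .of_map hf ?_⟩
  rw [ha, hb]
  exact isPeriodPair_gaussPeriod hψ

end Cyclotomic

theorem isCyclotomicExtension_cyclotomicField_rat (n : ℕ) [NeZero n] :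
    IsCyclotomicExtension {n} ℚ (CyclotomicField n ℚ) := by
  rw [← Subsingleton.elim (CyclotomicField.algebra n ℚ) DivisionRing.toRatAlgebra]
  exact CyclotomicField.isCyclotomicExtension n ℚ

theorem classGroup_of_cubic_subfield_277_general {F : Type*} [Field F] [NumberField F]
    [IsCyclotomicExtension {277} ℚ F] (L : IntermediateField ℚ F) (hL : finrank ℚ L = 3) :
    classNumber L = 4 ∧ Nonempty (ClassGroup (𝓞 L) ≃* Multiplicative (ZMod 2 × ZMod 2)) := by
  have : IsAbelianGalois ℚ F := IsCyclotomicExtension.isAbelianGalois {277} ℚ F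
  have : IsGalois ℚ L := (IsAbelianGalois.tower_bot ℚ L F).toIsGalois
  obtain ⟨a, b, h⟩ := exists_isPeriodPair hL
  have hK := h.isKleinFour_classGroup hL
  exact ⟨Nat.card_eq_fintype_card.symm.trans hK.card_four, IsKleinFour.nonempty_mulEquiv⟩

/-- Let `ℓ = 277` and let `L` be the unique degree-3 intermediate field of `ℚ(ζ_ℓ)/ℚ`.
Then the class number of `L` is `4` and the ideal class group of `L` is isomorphic to
`(ℤ/2ℤ) × (ℤ/2ℤ)`. -/
theorem classGroup_of_cubic_subfield_277
    (L : IntermediateField ℚ (CyclotomicField 277 ℚ)) (hL : Module.finrank ℚ L = 3) :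
    NumberField.classNumber L = 4 ∧
    Nonempty (ClassGroup (NumberField.RingOfIntegers L) ≃*
      Multiplicative (ZMod 2 × ZMod 2)) := by
  have := isCyclotomicExtension_cyclotomicField_rat 277
  have : NumberField (CyclotomicField 277 ℚ) := IsCyclotomicExtension.numberField {277} ℚ _
  exact classGroup_of_cubic_subfield_277_general L hL
end

section
/- Let ℓ = 349 and let L be the unique degree-3 intermediate field of ℚ(ζ_ℓ)/ℚ. Then the class number of L is 4, and the ideal class group of L is isomorphic to (ℤ/2ℤ) × (ℤ/2ℤ). -/
/-
The field `L` is generated by `ρ = η + 6`, where `η` is the Gaussian period of `116` terms modulo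
`349`; it is a root of `X³ - 17X² - 20X - 1`, of discriminant `349²`. Since a number field other
than `ℚ` has a discriminant of absolute value greater than `1`, the ring of integers is `ℤ[ρ]`.

By Minkowski's bound every ideal class contains an ideal of norm less than `78`. For each prime
`p ≠ 11` below this bound, a prime ideal of norm `p` contains some `x + yρ` of norm less than `p²`
in absolute value, so by descent the class group is generated by the primes above `11`. There are
three of them, `𝔭₃`, `𝔭₆`, `𝔭₈`, modulo which `ρ` is `3`, `6`, `8`, and
`𝔭₃² = (2 + 3ρ)`, `𝔭₆² = (1 - 2ρ)`, `𝔭₃𝔭₆𝔭₈ = (11)`. So the classes of `𝔭₃` and `𝔭₆` generate,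
and their squares are trivial.

If an ideal `I` with `I² = (α)` were principal, then `α` would be a unit times a square. The
quadratic residue characters at three suitable primes separate the units `-1`, `ρ`, `ρ + 1` and
are trivial at `α`; by Dirichlet's unit theorem that unit is then a square, and hence so is `α`,
which a fourth quadratic residue character excludes. Applied to `I = 𝔭₃`, `𝔭₆` and `𝔭₃𝔭₆`, this
shows that the class group is a Klein four-group.
-/
namespace CubicField349

open NumberField Module Polynomial
open scoped nonZeroDivisors

theorem isKleinFour_of_closure_pair_eq_top {G : Type*} [CommGroup G] {a b : G}
    (ha : a ^ 2 = 1) (hb : b ^ 2 = 1) (ha_ne : a ≠ 1) (hb_ne : b ≠ 1) (hab : a * b ≠ 1)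
    (htop : Subgroup.closure {a, b} = ⊤) : IsKleinFour G := by
  classical
  have hpow (g : G) : g ^ 2 = 1 := by
    obtain ⟨m, n, rfl⟩ := Subgroup.mem_closure_pair.mp (htop ▸ Subgroup.mem_top g)
    rw [mul_pow, ← zpow_natCast, ← zpow_natCast, zpow_comm, zpow_comm b]
    simp [ha, hb]
  have hgen : Subgroup.closure (({a, b} : Finset G) : Set G) = ⊤ := by simpa using htop
  have : Group.FG G := Group.fg_iff'.mpr ⟨_, {a, b}, rfl, hgen⟩
  have hdvd : Nat.card G ∣ 2 ^ 2 := (card_dvd_exponent_pow_rank' G hpow).trans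
    (pow_dvd_pow 2 ((Group.rank_le hgen).trans Finset.card_le_two))
  have : Finite G := Nat.finite_of_card_ne_zero (ne_zero_of_dvd_ne_zero (by simp) hdvd)
  have hba : a ≠ b := by
    rintro rfl
    exact hab (sq a ▸ ha)
  have hthree : 3 ≤ Nat.card G := by
    rw [← Set.ncard_eq_three.mpr ⟨1, a, b, ha_ne.symm, hb_ne.symm, hba, rfl⟩]
    exact Set.ncard_le_card _
  refine ⟨?_, ?_⟩
  · obtain ⟨k, hk, hcard⟩ := (Nat.dvd_prime_pow Nat.prime_two).mp hdvd
    interval_cases k <;> omega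
  · exact (Nat.dvd_prime Nat.prime_two).mp (Monoid.exponent_dvd_of_forall_pow_eq_one hpow)
      |>.resolve_left fun h ↦ ha_ne (by simpa [h] using Monoid.pow_exponent_eq_one a)

section Squares

theorem card_quotient_range_powMonoidHom_dvd {U : Type*} [CommGroup U] {S : Finset U}
    (hS : Subgroup.closure (S : Set U) = ⊤) (n : ℕ) :
    Nat.card (U ⧸ (powMonoidHom n : U →* U).range) ∣ n ^ S.card := by
  have : Group.FG U := Group.fg_iff.mpr ⟨S, hS, S.finite_toSet⟩
  have hexp (g : U ⧸ (powMonoidHom n : U →* U).range) : g ^ n = 1 := by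
    induction g using QuotientGroup.induction_on with
    | H g => exact (QuotientGroup.eq_one_iff _).mpr ⟨g, rfl⟩
  exact (card_dvd_exponent_pow_rank' _ hexp).trans <| pow_dvd_pow n <|
    (Group.rank_le_of_surjective _ (QuotientGroup.mk'_surjective _)).trans (Group.rank_le hS)

theorem isSquare_of_forall_sign_eq_one {U κ : Type*} [CommGroup U] [Fintype κ]
    [DecidableEq κ] {S : Finset U} (hS : Subgroup.closure (S : Set U) = ⊤)
    (hκ : S.card ≤ Fintype.card κ) (χ : κ → U →* ℤˣ) (u : κ → U)
    (hu : ∀ i j, χ i (u j) = if i = j then -1 else 1) {v : U} (hv : ∀ i, χ i v = 1) :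
    IsSquare v := by
  let squares : Subgroup U := (powMonoidHom 2).range
  let sign : U ⧸ squares →* (κ → ℤˣ) := QuotientGroup.lift squares (MonoidHom.pi χ) <| by
    rintro _ ⟨g, rfl⟩
    ext i
    simp [Int.units_sq]
  have hsign (g : U) (i : κ) : sign g i = χ i g := rfl
  have hsurj : Function.Surjective sign := by
    intro s
    refine ⟨(∏ j, if s j = -1 then u j else 1 : U), funext fun i ↦ ?_⟩
    rw [hsign, map_prod, Fintype.prod_eq_single i fun j hj ↦ by simp [hu, hj.symm, apply_ite (χ i)]]
    rcases Int.units_eq_one_or (s i) with hi | hi <;> simp [hu, hi]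
  have hcard : Nat.card (U ⧸ squares) ∣ 2 ^ S.card := card_quotient_range_powMonoidHom_dvd hS 2
  have : Finite (U ⧸ squares) :=
    Nat.finite_of_card_ne_zero (ne_zero_of_dvd_ne_zero (by simp) hcard)
  have hle : Nat.card (U ⧸ squares) ≤ Nat.card (κ → ℤˣ) :=
    calc Nat.card (U ⧸ squares) ≤ 2 ^ S.card := Nat.le_of_dvd (by positivity) hcard
      _ ≤ 2 ^ Fintype.card κ := Nat.pow_le_pow_right two_pos hκ
      _ = Nat.card (κ → ℤˣ) := by simp [Nat.card_eq_fintype_card]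
  have hone : (v : U ⧸ squares) = 1 :=
    (hsurj.bijective_of_nat_card_le hle).injective (funext fun i ↦ by simp [hsign, hv])
  obtain ⟨w, rfl⟩ := (QuotientGroup.eq_one_iff v).mp hone
  exact ⟨w, sq w⟩

variable {K : Type*} [Field K] [NumberField K]

open Units in
theorem exists_units_closure_eq_top : ∃ S : Finset (𝓞 K)ˣ,
    S.card ≤ NumberField.Units.rank K + 1 ∧ Subgroup.closure (S : Set (𝓞 K)ˣ) = ⊤ := by
  classical
  obtain ⟨ζ, hζ⟩ := (Subgroup.isCyclic_iff_exists_zpowers_eq_top (torsion K)).mp inferInstance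
  refine ⟨insert ζ (Finset.univ.image (fundSystem K)), ?_, ?_⟩
  · grw [Finset.card_insert_le, Finset.card_image_le, Finset.card_univ, Fintype.card_fin]
  · rw [← closure_fundSystem_sup_torsion_eq_top K, ← hζ, sup_comm]
    simp [-Set.singleton_union, Set.insert_eq, Subgroup.closure_union, Subgroup.zpowers_eq_closure]

theorem isSquare_unit_of_forall_eq_one {κ : Type*} [Fintype κ] [DecidableEq κ]
    (hκ : NumberField.Units.rank K + 1 ≤ Fintype.card κ) {χ : κ → 𝓞 K →* ℤ} {u : κ → (𝓞 K)ˣ}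
    (hu : ∀ i j, χ i (u j) = if i = j then -1 else 1) {v : (𝓞 K)ˣ} (hv : ∀ i, χ i v = 1) :
    IsSquare v := by
  obtain ⟨S, hcard, hS⟩ := exists_units_closure_eq_top (K := K)
  refine isSquare_of_forall_sign_eq_one hS (hcard.trans hκ) (fun i ↦ Units.map (χ i)) u
    (fun i j ↦ Units.ext ?_) (fun i ↦ Units.ext (hv i))
  rw [Units.coe_map, hu]
  split_ifs <;> rfl

theorem isSquare_of_span_singleton_eq_sq {κ : Type*} [Fintype κ] [DecidableEq κ]
    (hκ : NumberField.Units.rank K + 1 ≤ Fintype.card κ) {χ : κ → 𝓞 K →* ℤ} {u : κ → (𝓞 K)ˣ}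
    (hu : ∀ i j, χ i (u j) = if i = j then -1 else 1) {α : 𝓞 K} (hα : ∀ i, χ i α = 1)
    {I : Ideal (𝓞 K)} (hI : Ideal.span {α} = I ^ 2) (hprin : I.IsPrincipal) : IsSquare α := by
  obtain ⟨γ, rfl⟩ := hprin
  rw [Ideal.submodule_span_eq, Ideal.span_singleton_pow, Ideal.span_singleton_eq_span_singleton]
    at hI
  obtain ⟨v, hv⟩ := hI.symm
  have hχv (i : κ) : χ i v = 1 := by
    have h : χ i γ ^ 2 * χ i v = 1 := by rw [← map_pow, ← map_mul, hv, hα]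
    rcases Int.isUnit_iff.mp (v.isUnit.map (χ i)) with hi | hi
    · exact hi
    · nlinarith [sq_nonneg (χ i γ)]
  rw [← hv]
  exact (IsSquare.sq γ).mul ((isSquare_unit_of_forall_eq_one hκ hu hχv).map (Units.coeHom _))

theorem not_isPrincipal_of_span_singleton_eq_sq {κ : Type*} [Fintype κ] [DecidableEq κ]
    (hκ : NumberField.Units.rank K + 1 ≤ Fintype.card κ) {χ : κ → 𝓞 K →* ℤ} {u : κ → (𝓞 K)ˣ}
    (hu : ∀ i j, χ i (u j) = if i = j then -1 else 1) {α : 𝓞 K} (hα : ∀ i, χ i α = 1)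
    {ψ : 𝓞 K →* ℤ} (hψ : ψ α = -1) {I : Ideal (𝓞 K)} (hI : Ideal.span {α} = I ^ 2) :
    ¬ I.IsPrincipal := by
  intro hprin
  have hnonneg := ((isSquare_of_span_singleton_eq_sq hκ hu hα hI hprin).map ψ).nonneg
  rw [hψ] at hnonneg
  exact absurd hnonneg (by norm_num)

end Squares

section PrimesOfDegreeOne

variable {S : Type*} [CommRing S] [IsDedekindDomain S] [Module.Free ℤ S] {p : ℕ}

theorem absNorm_ker (φ : S →+* ZMod p) : Ideal.absNorm (RingHom.ker φ) = p := by
  rw [Ideal.absNorm_apply]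
  exact (Nat.card_congr (RingHom.quotientKerEquivOfSurjective
    (ZMod.ringHom_surjective φ)).toEquiv).trans (Nat.card_zmod p)

variable [hp : Fact p.Prime]

theorem exists_ker_eq_of_absNorm_eq {I : Ideal S} (hI : Ideal.absNorm I = p) :
    ∃ φ : S →+* ZMod p, RingHom.ker φ = I := by
  have hcard : Nat.card (S ⧸ I) = p := hI
  have : Finite (S ⧸ I) := Nat.finite_of_card_ne_zero (hcard ▸ hp.out.ne_zero)
  have := Fintype.ofFinite (S ⧸ I)
  let e := ZMod.ringEquivOfPrime (S ⧸ I) hp.out (Nat.card_eq_fintype_card.symm.trans hcard)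
  refine ⟨e.symm.toRingHom.comp (Ideal.Quotient.mk I), ?_⟩
  ext x
  simp [RingHom.mem_ker, Ideal.Quotient.eq_zero_iff_mem]

theorem ker_ne_bot (φ : S →+* ZMod p) : RingHom.ker φ ≠ ⊥ := by
  intro h
  have hφ := absNorm_ker φ
  rw [h, Ideal.absNorm_bot] at hφ
  exact hp.out.ne_zero hφ.symm

/-- The ideal class of the prime of degree one cut out by a homomorphism to `ZMod p`. -/
noncomputable def kerClass (φ : S →+* ZMod p) : ClassGroup S :=
  ClassGroup.mk0 ⟨RingHom.ker φ, mem_nonZeroDivisors_of_ne_zero (ker_ne_bot φ)⟩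

theorem kerClass_eq_one_iff {φ : S →+* ZMod p} :
    kerClass φ = 1 ↔ (RingHom.ker φ).IsPrincipal :=
  ClassGroup.mk0_eq_one_iff _

theorem kerClass_mul_kerClass_eq_one_iff {φ ψ : S →+* ZMod p} :
    kerClass φ * kerClass ψ = 1 ↔ (RingHom.ker φ * RingHom.ker ψ).IsPrincipal := by
  rw [kerClass, kerClass, ← map_mul]
  exact ClassGroup.mk0_eq_one_iff _

theorem prod_kerClass_eq_one_iff {ι : Type*} [Fintype ι] {φ : ι → S →+* ZMod p} :
    ∏ i, kerClass (φ i) = 1 ↔ (∏ i, RingHom.ker (φ i)).IsPrincipal := by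
  simp_rw [kerClass]
  rw [← map_prod (ClassGroup.mk0 (R := S)), ClassGroup.mk0_eq_one_iff (SetLike.coe_mem _)]
  simp

variable [Module.Finite ℤ S]

theorem span_singleton_eq_ker_sq {φ : S →+* ZMod p} {β : S}
    (hN : (Algebra.norm ℤ β).natAbs = p ^ 2) (hβ : ∀ ψ : S →+* ZMod p, ψ β = 0 ↔ ψ = φ) :
    Ideal.span {β} = RingHom.ker φ ^ 2 := by
  obtain ⟨J, hJ⟩ := Ideal.dvd_span_singleton.mpr (RingHom.mem_ker.mpr ((hβ φ).mpr rfl))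
  have hnorm := congrArg Ideal.absNorm hJ
  rw [Ideal.absNorm_span_singleton, hN, map_mul, absNorm_ker, sq] at hnorm
  obtain ⟨ψ, rfl⟩ := exists_ker_eq_of_absNorm_eq
    (Nat.eq_of_mul_eq_mul_left hp.out.pos hnorm).symm
  have hψ : β ∈ RingHom.ker ψ := Ideal.dvd_span_singleton.mp (hJ ▸ dvd_mul_left _ _)
  rw [hJ, (hβ ψ).mp hψ, sq]

theorem prod_ker_eq_span_natCast {ι : Type*} [Fintype ι] {φ : ι → S →+* ZMod p}
    (hφ : Function.Injective φ) (hι : Fintype.card ι = finrank ℤ S) :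
    ∏ i, RingHom.ker (φ i) = Ideal.span {(p : S)} := by
  have hprime (i : ι) : Prime (RingHom.ker (φ i)) :=
    Ideal.prime_of_isPrime (ker_ne_bot _) (RingHom.ker_isPrime _)
  have hdvd : ∏ i, RingHom.ker (φ i) ∣ Ideal.span {(p : S)} := by
    refine Finset.prod_dvd_of_isRelPrime (fun i _ j _ hij ↦ ?_) fun i _ ↦ ?_
    · exact (hprime i).irreducible.isRelPrime_iff_not_dvd.mpr fun h ↦
        hij <| hφ <| ZMod.ringHom_eq_of_ker_eq _ _ <|
          associated_iff_eq.mp ((hprime i).associated_of_dvd (hprime j) h)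
    · exact Ideal.dvd_span_singleton.mpr (by simp [RingHom.mem_ker])
  obtain ⟨J, hJ⟩ := hdvd
  have hnorm := congrArg Ideal.absNorm hJ
  rw [Ideal.absNorm_span_singleton, ← map_natCast (algebraMap ℤ S), Algebra.norm_algebraMap,
    map_mul, map_prod] at hnorm
  simp_rw [absNorm_ker, Finset.prod_const, Finset.card_univ, hι, Int.natAbs_pow] at hnorm
  have hJ1 : Ideal.absNorm J = 1 := by
    simpa [hp.out.ne_zero] using hnorm
  rw [hJ, Ideal.absNorm_eq_one_iff.mp hJ1, Ideal.mul_top]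

end PrimesOfDegreeOne

section Generation

variable {S : Type*} [CommRing S] [IsDedekindDomain S] [Module.Free ℤ S] [Module.Finite ℤ S]

theorem one_lt_absNorm {I : Ideal S} (h_bot : I ≠ ⊥) (h_top : I ≠ ⊤) : 1 < Ideal.absNorm I := by
  have := Ideal.absNorm_eq_zero_iff.not.mpr h_bot
  have := Ideal.absNorm_eq_one_iff.not.mpr h_top
  omega

theorem mk0_mem_of_norm_lt_sq {H : Subgroup (ClassGroup S)} {I : (Ideal S)⁰} {β : S}
    (hβI : β ∈ (I : Ideal S)) (hβ : β ≠ 0)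
    (hN : (Algebra.norm ℤ β).natAbs < Ideal.absNorm (I : Ideal S) ^ 2)
    (ih : ∀ J : (Ideal S)⁰, Ideal.absNorm (J : Ideal S) < Ideal.absNorm (I : Ideal S) →
      ClassGroup.mk0 J ∈ H) : ClassGroup.mk0 I ∈ H := by
  obtain ⟨J, hJ⟩ := Ideal.dvd_span_singleton.mpr hβI
  have hJ0 : J ≠ 0 := by
    rintro rfl
    exact hβ (by simpa using hJ)
  let J' : (Ideal S)⁰ := ⟨J, mem_nonZeroDivisors_of_ne_zero hJ0⟩
  have hJN : Ideal.absNorm J < Ideal.absNorm (I : Ideal S) := by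
    rw [← Ideal.absNorm_span_singleton, hJ, map_mul, sq] at hN
    exact lt_of_mul_lt_mul_left' hN
  have hIJ : ClassGroup.mk0 I = (ClassGroup.mk0 J')⁻¹ :=
    ClassGroup.mk0_eq_mk0_inv_iff.mpr ⟨β, hβ, hJ.symm⟩
  exact hIJ ▸ H.inv_mem (ih J' hJN)

theorem mk0_mem_of_isPrime (hS : finrank ℤ S ≤ 3) {H : Subgroup (ClassGroup S)} {I : (Ideal S)⁰}
    (hI : (I : Ideal S).IsPrime)
    (hprime : ∀ (p : ℕ) [Fact p.Prime] (φ : S →+* ZMod p), Ideal.absNorm (I : Ideal S) = p →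
      kerClass φ ∈ H ∨ ∃ β, φ β = 0 ∧ β ≠ 0 ∧ (Algebra.norm ℤ β).natAbs < p ^ 2)
    (ih : ∀ J : (Ideal S)⁰, Ideal.absNorm (J : Ideal S) < Ideal.absNorm (I : Ideal S) →
      ClassGroup.mk0 J ∈ H) : ClassGroup.mk0 I ∈ H := by
  obtain ⟨I, hI0⟩ := I
  dsimp only at hI hprime ih
  have : NeZero I := ⟨nonZeroDivisors.ne_zero hI0⟩
  obtain ⟨p, hp, hpI⟩ : ∃ p : ℕ, Fact p.Prime ∧ (p : S) ∈ I :=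
    ⟨_, ⟨Nat.absNorm_under_prime I⟩, Int.absNorm_under_mem I⟩
  have hpN : (Algebra.norm ℤ (p : S)).natAbs = p ^ finrank ℤ S := by
    rw [← map_natCast (algebraMap ℤ S), Algebra.norm_algebraMap, Int.natAbs_pow, Int.natAbs_natCast]
  have hp0 : (p : S) ≠ 0 := by
    intro h
    rw [h, Algebra.norm_zero, Int.natAbs_zero] at hpN
    exact pow_ne_zero _ hp.out.ne_zero hpN.symm
  obtain ⟨k, hk, hIk⟩ := (Nat.dvd_prime_pow hp.out).mp
    (hpN ▸ Int.natCast_dvd.mp (Ideal.absNorm_dvd_norm_of_mem hpI))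
  obtain rfl | rfl | hk2 : k = 0 ∨ k = 1 ∨ 2 ≤ k := by omega
  · exact absurd (Ideal.absNorm_eq_one_iff.mp hIk) hI.ne_top
  · rw [pow_one] at hIk
    obtain ⟨φ, rfl⟩ := exists_ker_eq_of_absNorm_eq hIk
    obtain h | ⟨β, hβφ, hβ, hN⟩ := hprime p φ hIk
    · exact h
    · exact mk0_mem_of_norm_lt_sq hβφ hβ (by simpa only [hIk] using hN) ih
  · -- `p` itself has norm at most `p ^ 3`, less than the square of `p ^ k`.
    refine mk0_mem_of_norm_lt_sq hpI hp0 ?_ ih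
    rw [hpN, hIk, ← pow_mul]
    exact Nat.pow_lt_pow_right hp.out.one_lt (by omega)

theorem mk0_mem_of_absNorm_le (hS : finrank ℤ S ≤ 3) {H : Subgroup (ClassGroup S)} {B : ℕ}
    (hprime : ∀ (p : ℕ) [Fact p.Prime] (φ : S →+* ZMod p), p ≤ B →
      kerClass φ ∈ H ∨ ∃ β, φ β = 0 ∧ β ≠ 0 ∧ (Algebra.norm ℤ β).natAbs < p ^ 2)
    (I : (Ideal S)⁰) (hI : Ideal.absNorm (I : Ideal S) ≤ B) : ClassGroup.mk0 I ∈ H := by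
  induction hn : Ideal.absNorm (I : Ideal S) using Nat.strong_induction_on generalizing I with
  | h n ih =>
    subst hn
    have ih' (J : (Ideal S)⁰) (hJ : Ideal.absNorm (J : Ideal S) < Ideal.absNorm (I : Ideal S)) :
        ClassGroup.mk0 J ∈ H := ih _ hJ J (hJ.le.trans hI) rfl
    by_cases hI_prime : (I : Ideal S).IsPrime
    · exact mk0_mem_of_isPrime hS hI_prime (fun p _ φ hp ↦ hprime p φ (hp ▸ hI)) ih'
    by_cases hI_top : (I : Ideal S) = ⊤
    · obtain rfl : I = 1 := Subtype.ext (hI_top.trans Ideal.one_eq_top.symm)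
      exact map_one (ClassGroup.mk0 (R := S)) ▸ H.one_mem
    obtain ⟨M, hM, hIM⟩ := Ideal.exists_le_maximal _ hI_top
    obtain ⟨J, hJ⟩ := Ideal.dvd_iff_le.mpr hIM
    have hM0 : M ≠ 0 := fun h ↦ nonZeroDivisors.coe_ne_zero I (by simp [hJ, h])
    have hJ0 : J ≠ 0 := fun h ↦ nonZeroDivisors.coe_ne_zero I (by simp [hJ, h])
    obtain rfl : I = ⟨M, mem_nonZeroDivisors_of_ne_zero hM0⟩ *
      ⟨J, mem_nonZeroDivisors_of_ne_zero hJ0⟩ := Subtype.ext hJ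
    have hMN := one_lt_absNorm hM0 hM.ne_top
    have hJN := one_lt_absNorm hJ0 fun h ↦ hI_prime (by simpa [h] using hM.isPrime)
    rw [map_mul]
    refine H.mul_mem (ih' _ ?_) (ih' _ ?_) <;>
      simp only [Submonoid.coe_mul, map_mul] <;> nlinarith

end Generation

section CubicExtensions

variable {R S : Type*} [CommRing R] [CommRing S] [Algebra R S] {P : Cubic R}

theorem leftMulMatrix_gen_of_cubic (b : Basis (Fin 3) R S) {θ : S} (hb : ∀ i, b i = θ ^ (i : ℕ))
    (ha : P.a = 1) (hθ : aeval θ P.toPoly = 0) :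
    Algebra.leftMulMatrix b θ = !![0, 0, -P.d; 1, 0, -P.c; 0, 1, -P.b] := by
  have h0 : b 0 = 1 := by simp [hb]
  have h1 : b 1 = θ := by simp [hb]
  have h2 : b 2 = θ ^ 2 := by simp [hb]
  have hcol0 : θ * b 0 = b 1 := by rw [h0, h1, mul_one]
  have hcol1 : θ * b 1 = b 2 := by rw [h1, h2, sq]
  have hcol2 : θ * b 2 = -P.d • b 0 + -P.c • b 1 + -P.b • b 2 := by
    simp only [Cubic.toPoly, ha, map_add, map_mul, map_pow, aeval_C, aeval_X, map_one] at hθ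
    simp only [h0, h1, h2, Algebra.smul_def, map_neg]
    linear_combination hθ
  ext i j
  rw [Algebra.leftMulMatrix_eq_repr_mul]
  fin_cases j <;> fin_cases i <;> simp [hcol0, hcol1, hcol2]

theorem norm_add_mul_of_cubic (b : Basis (Fin 3) R S) {θ : S} (hb : ∀ i, b i = θ ^ (i : ℕ))
    (ha : P.a = 1) (hθ : aeval θ P.toPoly = 0) (x y : R) :
    Algebra.norm R (algebraMap R S x + algebraMap R S y * θ) =
      x ^ 3 - P.b * x ^ 2 * y + P.c * x * y ^ 2 - P.d * y ^ 3 := by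
  rw [Algebra.norm_eq_matrix_det b, map_add, map_mul, leftMulMatrix_gen_of_cubic b hb ha hθ,
    AlgHom.commutes, AlgHom.commutes, Matrix.det_fin_three]
  simp [Matrix.algebraMap_matrix_apply, Matrix.mul_apply]
  ring

theorem discr_of_cubic (b : Basis (Fin 3) R S) {θ : S} (hb : ∀ i, b i = θ ^ (i : ℕ))
    (ha : P.a = 1) (hθ : aeval θ P.toPoly = 0) : Algebra.discr R b = P.discr := by
  have htrace (n : ℕ) : Algebra.trace R S (θ ^ n) =
      (!![0, 0, -P.d; 1, 0, -P.c; 0, 1, -P.b] ^ n).trace := by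
    rw [Algebra.trace_eq_matrix_trace b, map_pow, leftMulMatrix_gen_of_cubic b hb ha hθ]
  rw [Algebra.discr_def, Matrix.det_fin_three]
  simp only [Algebra.traceMatrix_apply, Algebra.traceForm_apply, hb, ← pow_add, htrace]
  simp [pow_succ, Matrix.trace_fin_three, Cubic.discr, ha]
  ring

theorem minpoly_eq_toPoly [Nontrivial R] (b : Basis (Fin 3) R S) {θ : S}
    (hb : ∀ i, b i = θ ^ (i : ℕ)) (ha : P.a = 1) (hθ : aeval θ P.toPoly = 0) :
    minpoly R θ = P.toPoly := by
  let pb : PowerBasis R S := ⟨θ, 3, b, hb⟩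
  refine (minpoly.unique' R θ (Cubic.monic_of_a_eq_one ha) hθ fun q hq ↦ ?_).symm
  by_contra! h
  have hdeg := pb.dim_le_degree_of_root h.1 h.2
  rw [Cubic.degree_of_a_ne_zero (by simp [ha])] at hq
  exact absurd hq hdeg.not_gt

theorem exists_algHom_apply_eq [Nontrivial R] (b : Basis (Fin 3) R S) {θ : S}
    (hb : ∀ i, b i = θ ^ (i : ℕ)) (ha : P.a = 1) (hθ : aeval θ P.toPoly = 0)
    {T : Type*} [CommRing T] [Algebra R T] {r : T} (hr : aeval r P.toPoly = 0) :
    ∃ φ : S →ₐ[R] T, φ θ = r := by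
  let pb : PowerBasis R S := ⟨θ, 3, b, hb⟩
  have hr' : aeval r (minpoly R pb.gen) = 0 := by
    rwa [show minpoly R pb.gen = P.toPoly from minpoly_eq_toPoly b hb ha hθ]
  exact ⟨pb.lift r hr', pb.lift_gen r hr'⟩

end CubicExtensions

section IntegralBasis

variable {K : Type*} [Field K] [NumberField K]

theorem coe_discr_int {ι : Type*} [Fintype ι] [DecidableEq ι] (v : ι → 𝓞 K) :
    (Algebra.discr ℤ v : ℚ) = Algebra.discr ℚ fun i ↦ (v i : K) := by
  rw [Algebra.discr_def, Algebra.discr_def, Int.cast_det]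
  congr 1
  ext i j
  simp [Algebra.traceMatrix_apply, Algebra.coe_trace_int]

theorem exists_basis_of_discr_eq_prime_sq {ι : Type*} [Fintype ι] [DecidableEq ι] {v : ι → 𝓞 K}
    (hι : Fintype.card ι = finrank ℚ K) (hK : 1 < finrank ℚ K) {p : ℕ} (hp : p.Prime)
    (hv : Algebra.discr ℤ v = p ^ 2) : ∃ b : Basis ι ℤ (𝓞 K), ⇑b = v := by
  let e : Basis ι ℤ (𝓞 K) := (RingOfIntegers.basis K).reindex
    (Fintype.equivOfCardEq (by rw [hι, ← finrank_eq_card_chooseBasisIndex, RingOfIntegers.rank]))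
  have hindex : (p : ℤ) ^ 2 = (e.toMatrix v).det ^ 2 * NumberField.discr K := by
    rw [← hv, ← discr_eq_discr K e, ← Algebra.discr_of_matrix_vecMul]
    exact congrArg _ (e.toMatrix_map_vecMul v).symm
  have hdvd : (e.toMatrix v).det.natAbs ∣ p := by
    rw [← Int.dvd_natCast, ← Int.pow_dvd_pow_iff two_ne_zero, hindex]
    exact dvd_mul_right _ _
  have hunit : IsUnit (e.toMatrix v).det := by
    refine Int.isUnit_iff_natAbs_eq.mpr (((Nat.dvd_prime hp).mp hdvd).resolve_right fun h ↦ ?_)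
    rw [← Int.natAbs_sq (e.toMatrix v).det, h] at hindex
    have hd : NumberField.discr K = 1 :=
      (mul_right_eq_self₀.mp hindex.symm).resolve_right (by simp [hp.ne_zero])
    exact absurd (abs_discr_gt_two hK) (by rw [hd]; norm_num)
  have hbasis := (e.is_basis_iff_det (v := v)).mpr (by rwa [Basis.det_apply])
  exact ⟨Basis.mk hbasis.1 hbasis.2.ge, Basis.coe_mk _ _⟩

theorem exists_basis_pow_of_cubic {P : Cubic ℤ} (ha : P.a = 1) (hP : Irreducible P.toPoly)
    {p : ℕ} (hp : p.Prime) (hdiscr : P.discr = p ^ 2) (hK : finrank ℚ K = 3) {θ : 𝓞 K}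
    (hθ : aeval θ P.toPoly = 0) : ∃ b : Basis (Fin 3) ℤ (𝓞 K), ∀ i, b i = θ ^ (i : ℕ) := by
  let Q : Cubic ℚ := P.map (Int.castRingHom ℚ)
  have hQ : Q.toPoly = P.toPoly.map (algebraMap ℤ ℚ) := Cubic.map_toPoly
  have hQa : Q.a = 1 := by simp [Q, Cubic.map, ha]
  have hQθ : aeval (θ : K) Q.toPoly = 0 := by
    rw [hQ, aeval_map_algebraMap, aeval_algebraMap_apply, hθ, map_zero]
  have hmin : minpoly ℚ (θ : K) = Q.toPoly := by
    refine (minpoly.eq_of_irreducible_of_monic ?_ hQθ (Cubic.monic_of_a_eq_one hQa)).symm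
    rw [hQ]
    exact (Cubic.monic_of_a_eq_one ha).irreducible_iff_irreducible_map_fraction_map.mp hP
  have hlin : LinearIndependent ℚ fun i : Fin 3 ↦ (θ : K) ^ (i : ℕ) := by
    have h := linearIndependent_pow (K := ℚ) (θ : K)
    rwa [hmin, Cubic.natDegree_of_a_ne_zero (by simp [hQa])] at h
  let bQ := basisOfLinearIndependentOfCardEqFinrank hlin (by simp [hK])
  have hbQ (i : Fin 3) : bQ i = (θ : K) ^ (i : ℕ) := by simp [bQ]
  have hv : Algebra.discr ℤ (fun i : Fin 3 ↦ θ ^ (i : ℕ)) = p ^ 2 := by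
    have h := discr_of_cubic bQ hbQ hQa hQθ
    rw [funext hbQ, show Q.discr = P.discr by simp [Q, Cubic.map, Cubic.discr], hdiscr] at h
    have hcoe := coe_discr_int fun i : Fin 3 ↦ θ ^ (i : ℕ)
    simp only [map_pow, h] at hcoe
    exact_mod_cast hcoe
  obtain ⟨b, hb⟩ := exists_basis_of_discr_eq_prime_sq (by simp [hK]) (by omega) hp hv
  exact ⟨b, congrFun hb⟩

end IntegralBasis

/-- The cubic `X³ - 17X² - 20X - 1`. If `η` is a cubic Gaussian period modulo `349`, it is the
minimal polynomial of `η + 6`; the translation makes both the root `ρ` and `ρ + 1` units. -/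
def periodCubic : Cubic ℤ := ⟨1, -17, -20, -1⟩

theorem discr_periodCubic : periodCubic.discr = (349 : ℕ) ^ 2 := by decide

theorem irreducible_periodCubic : Irreducible periodCubic.toPoly := by
  have hmonic : periodCubic.toPoly.Monic := Cubic.monic_of_a_eq_one rfl
  refine hmonic.irreducible_of_irreducible_map (Int.castRingHom (ZMod 2)) _ ?_
  have hdeg : (periodCubic.toPoly.map (Int.castRingHom (ZMod 2))).natDegree = 3 :=
    (hmonic.natDegree_map _).trans (Cubic.natDegree_of_a_ne_zero one_ne_zero)
  have hroot (a : ZMod 2) : eval₂ (Int.castRingHom (ZMod 2)) a periodCubic.toPoly ≠ 0 := by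
    simp only [Cubic.toPoly, periodCubic, eval₂_add, eval₂_mul, eval₂_C, eval₂_X_pow, eval₂_X]
    decide +revert
  rw [irreducible_iff_roots_eq_zero_of_degree_le_three (by omega) (by omega)]
  exact Multiset.eq_zero_of_forall_notMem fun a ha ↦
    hroot a (by simpa [eval_map] using (mem_roots'.mp ha).2)

theorem aeval_periodCubic_eq_zero_iff {T : Type*} [CommRing T] {r : T} :
    aeval r periodCubic.toPoly = 0 ↔ r ^ 3 - 17 * r ^ 2 - 20 * r - 1 = 0 := by
  simp only [Cubic.toPoly, periodCubic, map_add, map_mul, map_pow, aeval_C, aeval_X]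
  simp [sub_eq_add_neg]

section PeriodCubicField

variable {S : Type*} [CommRing S] {b : Basis (Fin 3) ℤ S} {ρ : S}

theorem norm_add_mul (hb : ∀ i, b i = ρ ^ (i : ℕ)) (hρ : aeval ρ periodCubic.toPoly = 0)
    (x y : ℤ) : Algebra.norm ℤ (x + y * ρ) = x ^ 3 + 17 * x ^ 2 * y - 20 * x * y ^ 2 + y ^ 3 := by
  have h := norm_add_mul_of_cubic b hb rfl hρ x y
  simp only [periodCubic, algebraMap_int_eq, eq_intCast] at h
  rw [h]
  ring

theorem ringHom_root {T : Type*} [CommRing T] (hρ : aeval ρ periodCubic.toPoly = 0) (φ : S →+* T) :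
    φ ρ ^ 3 - 17 * φ ρ ^ 2 - 20 * φ ρ - 1 = 0 := by
  simpa [map_ofNat φ] using congrArg φ (aeval_periodCubic_eq_zero_iff.mp hρ)

theorem exists_ringHom_apply_eq {T : Type*} [CommRing T] (hb : ∀ i, b i = ρ ^ (i : ℕ))
    (hρ : aeval ρ periodCubic.toPoly = 0) {r : T} (hr : r ^ 3 - 17 * r ^ 2 - 20 * r - 1 = 0) :
    ∃ φ : S →+* T, φ ρ = r := by
  obtain ⟨φ, hφ⟩ := exists_algHom_apply_eq b hb rfl hρ (aeval_periodCubic_eq_zero_iff.mpr hr)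
  exact ⟨φ, hφ⟩

theorem ringHom_eq_iff {T : Type*} [CommRing T] (hb : ∀ i, b i = ρ ^ (i : ℕ)) {φ ψ : S →+* T} :
    φ = ψ ↔ φ ρ = ψ ρ := by
  refine ⟨fun h ↦ h ▸ rfl, fun h ↦ ?_⟩
  let pb : PowerBasis ℤ S := ⟨ρ, 3, b, hb⟩
  exact congrArg AlgHom.toRingHom (pb.algHom_ext (f := φ.toIntAlgHom) (g := ψ.toIntAlgHom) h)

theorem exists_legendreSym_character (hb : ∀ i, b i = ρ ^ (i : ℕ))
    (hρ : aeval ρ periodCubic.toPoly = 0) (q : ℕ) [Fact q.Prime] {r : ℤ}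
    (hr : (q : ℤ) ∣ r ^ 3 - 17 * r ^ 2 - 20 * r - 1) :
    ∃ χ : S →* ℤ, ∀ x y : ℤ, χ (x + y * ρ) = legendreSym q (x + y * r) := by
  obtain ⟨φ, hφ⟩ := exists_ringHom_apply_eq hb hρ (r := (r : ZMod q))
    (by exact_mod_cast (ZMod.intCast_zmod_eq_zero_iff_dvd _ q).mpr hr)
  exact ⟨(quadraticChar (ZMod q)).toMonoidHom.comp φ.toMonoidHom, fun x y ↦ by
    simp [legendreSym, hφ]⟩

theorem exists_small_norm_of_root : ∀ p ∈ Finset.Ioo 1 78, p ≠ 11 → ∀ r ∈ Finset.range p,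
    (p : ℤ) ∣ r ^ 3 - 17 * r ^ 2 - 20 * r - 1 →
    ∃ x ∈ Finset.Icc (0 : ℤ) 10, ∃ y ∈ Finset.Icc (-5 : ℤ) 5, (p : ℤ) ∣ x + y * r ∧
      x ^ 3 + 17 * x ^ 2 * y - 20 * x * y ^ 2 + y ^ 3 ≠ 0 ∧
      (x ^ 3 + 17 * x ^ 2 * y - 20 * x * y ^ 2 + y ^ 3).natAbs < p ^ 2 := by
  decide +kernel

theorem exists_norm_lt_sq_of_ringHom (hb : ∀ i, b i = ρ ^ (i : ℕ))
    (hρ : aeval ρ periodCubic.toPoly = 0) {p : ℕ} [hp : Fact p.Prime] (hp_le : p ≤ 77)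
    (hp_ne : p ≠ 11) (φ : S →+* ZMod p) :
    ∃ β, φ β = 0 ∧ β ≠ 0 ∧ (Algebra.norm ℤ β).natAbs < p ^ 2 := by
  have hr : (((φ ρ).val : ℤ) : ZMod p) = φ ρ := by simp
  obtain ⟨x, -, y, -, hdvd, hN0, hN⟩ := exists_small_norm_of_root p
    (Finset.mem_Ioo.mpr ⟨hp.out.one_lt, by omega⟩) hp_ne (φ ρ).val
    (Finset.mem_range.mpr (ZMod.val_lt _)) <| by
      rw [← ZMod.intCast_zmod_eq_zero_iff_dvd]
      push_cast [hr]
      simpa using ringHom_root hρ φ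
  rw [← norm_add_mul hb hρ] at hN0 hN
  refine ⟨x + y * ρ, ?_, ?_, hN⟩
  · rw [← ZMod.intCast_zmod_eq_zero_iff_dvd] at hdvd
    simpa using hdvd
  · intro h
    have : Module.Free ℤ S := .of_basis b
    have : Module.Finite ℤ S := .of_basis b
    have : Nontrivial S := φ.domain_nontrivial
    exact hN0 (by rw [h, Algebra.norm_zero])

theorem span_add_mul_eq_ker_sq [IsDedekindDomain S] (hb : ∀ i, b i = ρ ^ (i : ℕ))
    (hρ : aeval ρ periodCubic.toPoly = 0) {p : ℕ} [Fact p.Prime] {φ : S →+* ZMod p} {x y : ℤ}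
    (hφ : x + y * φ ρ = 0) (hy : (y : ZMod p) ≠ 0)
    (hN : (x ^ 3 + 17 * x ^ 2 * y - 20 * x * y ^ 2 + y ^ 3).natAbs = p ^ 2) :
    Ideal.span {(x + y * ρ : S)} = RingHom.ker φ ^ 2 := by
  have : Module.Free ℤ S := .of_basis b
  have : Module.Finite ℤ S := .of_basis b
  refine span_singleton_eq_ker_sq (by rw [norm_add_mul hb hρ, hN]) fun ψ ↦ ?_
  rw [ringHom_eq_iff hb, map_add, map_mul, map_intCast, map_intCast, ← hφ]
  simp [hy]

end PeriodCubicField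

section ClassGroup

theorem isUnit_root {S : Type*} [CommRing S] {ρ : S} (hρ : aeval ρ periodCubic.toPoly = 0) :
    IsUnit ρ :=
  .of_mul_eq_one (ρ ^ 2 - 17 * ρ - 20) (by linear_combination aeval_periodCubic_eq_zero_iff.mp hρ)

theorem isUnit_one_add_root {S : Type*} [CommRing S] {ρ : S}
    (hρ : aeval ρ periodCubic.toPoly = 0) : IsUnit (1 + ρ) :=
  .of_mul_eq_one (-(ρ ^ 2 - 18 * ρ - 2))
    (by linear_combination -aeval_periodCubic_eq_zero_iff.mp hρ)

theorem exists_separating_characters {S : Type*} [CommRing S] {b : Basis (Fin 3) ℤ S} {ρ : S}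
    (hb : ∀ i, b i = ρ ^ (i : ℕ)) (hρ : aeval ρ periodCubic.toPoly = 0) :
    ∃ (χ : Fin 3 → S →* ℤ) (u : Fin 3 → Sˣ), (∀ i j, χ i (u j) = if i = j then -1 else 1) ∧
      (∀ i, χ i (2 + 3 * ρ) = 1) ∧ ∀ i, χ i (1 + -2 * ρ) = 1 := by
  have : Fact (Nat.Prime 31) := ⟨by norm_num⟩
  have : Fact (Nat.Prime 269) := ⟨by norm_num⟩
  have : Fact (Nat.Prime 409) := ⟨by norm_num⟩
  -- Found by search: with these roots of the cubic, the three residue symbols form an identity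
  -- matrix on `-1`, `ρ`, `1 + ρ`.
  obtain ⟨χ₀, h₀⟩ := exists_legendreSym_character hb hρ 31 (r := 19) (by decide)
  obtain ⟨χ₁, h₁⟩ := exists_legendreSym_character hb hρ 269 (r := 60) (by decide)
  obtain ⟨χ₂, h₂⟩ := exists_legendreSym_character hb hρ 409 (r := 25) (by decide)
  have hχ (x y : ℤ) {z : S} (hz : z = x + y * ρ) (i : Fin 3) : ![χ₀, χ₁, χ₂] i z =
      ![legendreSym 31 (x + y * 19), legendreSym 269 (x + y * 60), legendreSym 409 (x + y * 25)] i
      := by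
    subst hz
    fin_cases i
    exacts [h₀ x y, h₁ x y, h₂ x y]
  refine ⟨![χ₀, χ₁, χ₂], ![-1, (isUnit_root hρ).unit, (isUnit_one_add_root hρ).unit],
    fun i j ↦ ?_, fun i ↦ (hχ 2 3 (by simp) i).trans ?_, fun i ↦ (hχ 1 (-2) (by simp) i).trans ?_⟩
  · fin_cases j
    · refine (hχ (-1) 0 (by simp) i).trans ?_
      fin_cases i <;> norm_num
    · refine (hχ 0 1 (by simp) i).trans ?_
      fin_cases i <;> norm_num
    · refine (hχ 1 1 (by simp) i).trans ?_
      fin_cases i <;> norm_num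
  · fin_cases i <;> norm_num
  · fin_cases i <;> norm_num

instance fact_prime_eleven : Fact (Nat.Prime 11) := ⟨by norm_num⟩

section PrimesAboveEleven

variable {S : Type*} [CommRing S] [IsDedekindDomain S] {b : Basis (Fin 3) ℤ S} {ρ : S}
  {φ₃ φ₆ : S →+* ZMod 11}

theorem span_eq_ker_sq_of_apply_eq_three (hb : ∀ i, b i = ρ ^ (i : ℕ))
    (hρ : aeval ρ periodCubic.toPoly = 0) (hφ : φ₃ ρ = 3) :
    Ideal.span {2 + 3 * ρ} = RingHom.ker φ₃ ^ 2 := by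
  simpa using span_add_mul_eq_ker_sq hb hρ (φ := φ₃) (x := 2) (y := 3) (by rw [hφ]; decide)
    (by decide) (by decide)

theorem span_eq_ker_sq_of_apply_eq_six (hb : ∀ i, b i = ρ ^ (i : ℕ))
    (hρ : aeval ρ periodCubic.toPoly = 0) (hφ : φ₆ ρ = 6) :
    Ideal.span {1 + -2 * ρ} = RingHom.ker φ₆ ^ 2 := by
  simpa using span_add_mul_eq_ker_sq hb hρ (φ := φ₆) (x := 1) (y := -2) (by rw [hφ]; decide)
    (by decide) (by decide)

theorem kerClass_mem_closure [Module.Free ℤ S] (hb : ∀ i, b i = ρ ^ (i : ℕ))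
    (hρ : aeval ρ periodCubic.toPoly = 0) (h₃ : φ₃ ρ = 3) (h₆ : φ₆ ρ = 6) (φ : S →+* ZMod 11) :
    kerClass φ ∈ Subgroup.closure {kerClass φ₃, kerClass φ₆} := by
  have : Module.Finite ℤ S := .of_basis b
  have hroots : φ ρ = 3 ∨ φ ρ = 6 ∨ φ ρ = 8 := by
    have h := ringHom_root hρ φ
    generalize φ ρ = r at h
    decide +revert
  rcases hroots with h | h | h
  · rw [(ringHom_eq_iff hb).mpr (h.trans h₃.symm)]
    exact Subgroup.subset_closure (by simp)
  · rw [(ringHom_eq_iff hb).mpr (h.trans h₆.symm)]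
    exact Subgroup.subset_closure (by simp)
  have hinj : Function.Injective ![φ₃, φ₆, φ] := by
    refine .of_comp (f := fun f ↦ f ρ) ?_
    have hcomp : (fun f : S →+* ZMod 11 ↦ f ρ) ∘ ![φ₃, φ₆, φ] = ![3, 6, 8] := by
      ext i
      fin_cases i <;> simp [h₃, h₆, h]
    rw [hcomp]
    decide
  have hprod : kerClass φ₃ * kerClass φ₆ * kerClass φ = 1 := by
    refine (Fin.prod_univ_three fun i ↦ kerClass (![φ₃, φ₆, φ] i)).symm.trans ?_
    rw [prod_kerClass_eq_one_iff, prod_ker_eq_span_natCast hinj (finrank_eq_card_basis b).symm]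
    exact ⟨_, rfl⟩
  rw [eq_inv_of_mul_eq_one_right hprod]
  exact inv_mem (mul_mem (Subgroup.subset_closure (by simp)) (Subgroup.subset_closure (by simp)))

end PrimesAboveEleven

variable {K : Type*} [Field K] [NumberField K] {b : Basis (Fin 3) ℤ (𝓞 K)} {ρ : 𝓞 K}

theorem kerClass_ne_one {φ₃ φ₆ : 𝓞 K →+* ZMod 11} (hb : ∀ i, b i = ρ ^ (i : ℕ))
    (hρ : aeval ρ periodCubic.toPoly = 0) (hrank : NumberField.Units.rank K = 2)
    (h₃ : φ₃ ρ = 3) (h₆ : φ₆ ρ = 6) :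
    kerClass φ₃ ≠ 1 ∧ kerClass φ₆ ≠ 1 ∧ kerClass φ₃ * kerClass φ₆ ≠ 1 := by
  have : Fact (Nat.Prime 41) := ⟨by norm_num⟩
  obtain ⟨χ, u, hu, hχ₃, hχ₆⟩ := exists_separating_characters hb hρ
  obtain ⟨ψ, hψ⟩ := exists_legendreSym_character hb hρ 41 (r := 31) (by decide)
  obtain ⟨ψ', hψ'⟩ := exists_legendreSym_character hb hρ 41 (r := 32) (by decide)
  have hψ₃ : ψ (2 + 3 * ρ) = -1 := by simpa using (hψ 2 3).trans (by norm_num)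
  have hψ₆ : ψ (1 + -2 * ρ) = 1 := by simpa using (hψ 1 (-2)).trans (by norm_num)
  have hψ'₆ : ψ' (1 + -2 * ρ) = -1 := by simpa using (hψ' 1 (-2)).trans (by norm_num)
  have hsq₃ := span_eq_ker_sq_of_apply_eq_three hb hρ h₃
  have hsq₆ := span_eq_ker_sq_of_apply_eq_six hb hρ h₆
  have hκ : NumberField.Units.rank K + 1 ≤ Fintype.card (Fin 3) := by simp [hrank]
  rw [Ne, Ne, Ne, kerClass_mul_kerClass_eq_one_iff, kerClass_eq_one_iff, kerClass_eq_one_iff]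
  refine ⟨not_isPrincipal_of_span_singleton_eq_sq hκ hu hχ₃ hψ₃ hsq₃,
    not_isPrincipal_of_span_singleton_eq_sq hκ hu hχ₆ hψ'₆ hsq₆,
    not_isPrincipal_of_span_singleton_eq_sq hκ hu (α := (2 + 3 * ρ) * (1 + -2 * ρ))
      (fun i ↦ by rw [map_mul, hχ₃, hχ₆, one_mul]) (ψ := ψ) (by rw [map_mul, hψ₃, hψ₆, mul_one]) ?_⟩
  rw [mul_pow, ← hsq₃, ← hsq₆, Ideal.span_singleton_mul_span_singleton]

theorem discr_eq (hb : ∀ i, b i = ρ ^ (i : ℕ)) (hρ : aeval ρ periodCubic.toPoly = 0) :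
    NumberField.discr K = (349 : ℕ) ^ 2 := by
  rw [← NumberField.discr_eq_discr K b, discr_of_cubic b hb rfl hρ, discr_periodCubic]

theorem exists_mk0_eq_absNorm_le (hb : ∀ i, b i = ρ ^ (i : ℕ))
    (hρ : aeval ρ periodCubic.toPoly = 0) [IsTotallyReal K] (c : ClassGroup (𝓞 K)) :
    ∃ I : (Ideal (𝓞 K))⁰, ClassGroup.mk0 I = c ∧ Ideal.absNorm (I : Ideal (𝓞 K)) ≤ 77 := by
  obtain ⟨I, hI, hN⟩ := exists_ideal_in_class_of_norm_le c
  refine ⟨I, hI, Nat.lt_succ_iff.mp (Nat.cast_lt (α := ℝ).mp (hN.trans_lt ?_))⟩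
  rw [IsTotallyReal.nrComplexPlaces_eq_zero, ← RingOfIntegers.rank, finrank_eq_card_basis b,
    discr_eq hb hρ]
  norm_num [Nat.factorial]

theorem isKleinFour_classGroup [IsTotallyReal K] (hK : finrank ℚ K = 3)
    (hρ : aeval ρ periodCubic.toPoly = 0) :
    IsKleinFour (ClassGroup (𝓞 K)) := by
  obtain ⟨b, hb⟩ := exists_basis_pow_of_cubic rfl irreducible_periodCubic
    (by norm_num : Nat.Prime 349) discr_periodCubic hK hρ
  have hrank : NumberField.Units.rank K = 2 := by
    have := InfinitePlace.card_add_two_mul_card_eq_rank K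
    rw [IsTotallyReal.nrComplexPlaces_eq_zero] at this
    rw [NumberField.Units.rank, InfinitePlace.card_eq_nrRealPlaces_add_nrComplexPlaces,
      IsTotallyReal.nrComplexPlaces_eq_zero]
    omega
  obtain ⟨φ₃, h₃⟩ := exists_ringHom_apply_eq hb hρ (r := (3 : ZMod 11)) (by decide)
  obtain ⟨φ₆, h₆⟩ := exists_ringHom_apply_eq hb hρ (r := (6 : ZMod 11)) (by decide)
  obtain ⟨hne₃, hne₆, hne⟩ := kerClass_ne_one hb hρ hrank h₃ h₆
  refine isKleinFour_of_closure_pair_eq_top ?_ ?_ hne₃ hne₆ hne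
    (eq_top_iff.mpr fun c _ ↦ ?_)
  · rw [sq, kerClass_mul_kerClass_eq_one_iff, ← sq, ← span_eq_ker_sq_of_apply_eq_three hb hρ h₃]
    exact ⟨_, rfl⟩
  · rw [sq, kerClass_mul_kerClass_eq_one_iff, ← sq, ← span_eq_ker_sq_of_apply_eq_six hb hρ h₆]
    exact ⟨_, rfl⟩
  · obtain ⟨I, rfl, hI⟩ := exists_mk0_eq_absNorm_le hb hρ c
    refine mk0_mem_of_absNorm_le (by simp [finrank_eq_card_basis b]) (fun p _ φ hp ↦ ?_) I hI
    by_cases hp11 : p = 11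
    · subst hp11
      exact .inl (kerClass_mem_closure hb hρ h₃ h₆ φ)
    · exact .inr (exists_norm_lt_sq_of_ringHom hb hρ hp hp11 φ)

end ClassGroup

section GaussPeriods

theorem sum_mul_left_of_pow_eq_one {A M : Type*} [CommRing A] [Fintype A] [DecidableEq A]
    [AddCommMonoid M] {n : ℕ} (hn : n ≠ 0) (f : A → M) {u : A} (hu : u ^ n = 1) :
    ∑ h with h ^ n = 1, f (u * h) = ∑ h with h ^ n = 1, f h := by
  obtain ⟨u, rfl⟩ := IsUnit.of_pow_eq_one hu hn
  refine Finset.sum_equiv u.mulLeft (fun h ↦ ?_) fun _ _ ↦ rfl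
  simp [mul_pow, hu]

variable {A R : Type*} [CommRing A] [Fintype A] [DecidableEq A] [CommRing R] {n : ℕ}

/-- The Gaussian period of the additive character `e` along the coset `c * H`, where `H` is the
group of `n`-th roots of unity of `A`. For `A = ZMod ℓ` and `e` given by a primitive `ℓ`-th root
of unity, this is the classical period of `n` terms. -/
def gaussPeriod (n : ℕ) (e : AddChar A R) (c : A) : R := ∑ h with h ^ n = 1, e (c * h)

theorem gaussPeriod_mul_right (hn : n ≠ 0) (e : AddChar A R) (c : A) {u : A} (hu : u ^ n = 1) :
    gaussPeriod n e (c * u) = gaussPeriod n e c := by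
  simp_rw [gaussPeriod, mul_assoc]
  exact sum_mul_left_of_pow_eq_one hn (fun h ↦ e (c * h)) hu

theorem gaussPeriod_zero (e : AddChar A R) :
    gaussPeriod n e 0 = Finset.card {h : A | h ^ n = 1} := by
  simp [gaussPeriod]

theorem gaussPeriod_mul_gaussPeriod (hn : n ≠ 0) (e : AddChar A R) (c d : A) :
    gaussPeriod n e c * gaussPeriod n e d = ∑ k with k ^ n = 1, gaussPeriod n e (c + d * k) := by
  calc gaussPeriod n e c * gaussPeriod n e d
      = ∑ h with h ^ n = 1, e (c * h) * gaussPeriod n e (d * h) := by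
        rw [gaussPeriod, Finset.sum_mul]
        refine Finset.sum_congr rfl fun h hh ↦ ?_
        rw [gaussPeriod_mul_right hn e d (Finset.mem_filter.mp hh).2]
    _ = ∑ h with h ^ n = 1, ∑ k with k ^ n = 1, e ((c + d * k) * h) := by
        refine Finset.sum_congr rfl fun h _ ↦ ?_
        rw [gaussPeriod, Finset.mul_sum]
        refine Finset.sum_congr rfl fun k _ ↦ ?_
        rw [← AddChar.map_add_eq_mul]
        ring_nf
    _ = ∑ k with k ^ n = 1, gaussPeriod n e (c + d * k) := Finset.sum_comm

theorem sum_gaussPeriod [Nontrivial A] [IsDomain R] (hn : n ≠ 0) {e : AddChar A R}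
    (he : e.IsPrimitive) : ∑ c, gaussPeriod n e c = 0 := by
  simp_rw [gaussPeriod]
  rw [Finset.sum_comm]
  refine Finset.sum_eq_zero fun h hh ↦ ?_
  have hh0 : h ≠ 0 := (IsUnit.of_pow_eq_one (Finset.mem_filter.mp hh).2 hn).ne_zero
  rw [AddChar.sum_mulShift h he, if_neg hh0, Nat.cast_zero]

variable {k : Type*} [Field k] [Fintype k] [DecidableEq k]

theorem gaussPeriod_eq_of_pow_eq (hn : n ≠ 0) (e : AddChar k R) {a b : k} (h : a ^ n = b ^ n) :
    gaussPeriod n e a = gaussPeriod n e b := by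
  obtain rfl | hb := eq_or_ne b 0
  · rw [eq_zero_of_pow_eq_zero (h.trans (zero_pow hn))]
  · rw [← mul_div_cancel₀ a hb, gaussPeriod_mul_right hn e b]
    rw [div_pow, h, div_self (pow_ne_zero n hb)]

theorem sum_gaussPeriod_eq_of_map_pow_eq {ι : Type*} (hn : n ≠ 0) (e : AddChar k R)
    {s : Finset ι} {f : ι → k} {t : Multiset k}
    (h : (s.val.map fun i ↦ f i ^ n) = t.map (· ^ n)) :
    ∑ i ∈ s, gaussPeriod n e (f i) = (t.map (gaussPeriod n e)).sum := by
  have hfactors : (gaussPeriod n e).FactorsThrough (· ^ n : k → k) :=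
    fun _ _ ↦ gaussPeriod_eq_of_pow_eq hn e
  obtain ⟨g, hg⟩ := (Function.factorsThrough_iff _).mp hfactors
  calc ∑ i ∈ s, gaussPeriod n e (f i) = ((s.val.map fun i ↦ f i ^ n).map g).sum := by
        rw [hg, Multiset.map_map]
        rfl
    _ = (t.map (gaussPeriod n e)).sum := by rw [h, Multiset.map_map, hg]

theorem gaussPeriod_349_zero (e : AddChar (ZMod 349) R) : gaussPeriod 116 e 0 = 116 := by
  have hcard : Finset.card {h : ZMod 349 | h ^ 116 = 1} = 116 := by decide +kernel
  rw [gaussPeriod_zero, hcard, Nat.cast_ofNat]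

instance fact_prime_349 : Fact (Nat.Prime 349) := ⟨by norm_num⟩

/- `1`, `2`, `4` represent the cosets of the nonzero cubes modulo `349`, which the `116`-th power
tells apart; the coefficients of the two products below are cyclotomic numbers of order three. -/
theorem gaussPeriod_one_add_two_add_four [IsDomain R] [CharZero R] {e : AddChar (ZMod 349) R}
    (he : e.IsPrimitive) :
    gaussPeriod 116 e 1 + gaussPeriod 116 e 2 + gaussPeriod 116 e 4 = -1 := by
  have hsum : ∑ c, gaussPeriod 116 e c = _ := sum_gaussPeriod_eq_of_map_pow_eq (by norm_num) e
    (t := 1 • {0} + 116 • {1} + 116 • {2} + 116 • {4}) (by decide +kernel)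
  rw [sum_gaussPeriod (by norm_num) he] at hsum
  simp only [Multiset.map_add, Multiset.map_nsmul, Multiset.map_singleton, Multiset.sum_add,
    Multiset.sum_nsmul, Multiset.sum_singleton, gaussPeriod_349_zero, nsmul_eq_mul] at hsum
  push_cast at hsum
  exact mul_left_cancel₀ (show (116 : R) ≠ 0 by norm_num) (by linear_combination -hsum)

theorem gaussPeriod_one_mul_one (e : AddChar (ZMod 349) R) :
    gaussPeriod 116 e 1 * gaussPeriod 116 e 1 = 116 + 42 * gaussPeriod 116 e 1 +
      37 * gaussPeriod 116 e 2 + 36 * gaussPeriod 116 e 4 := by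
  rw [gaussPeriod_mul_gaussPeriod (by norm_num), sum_gaussPeriod_eq_of_map_pow_eq (by norm_num) e
    (t := 1 • {0} + 42 • {1} + 37 • {2} + 36 • {4}) (by decide +kernel)]
  simp [Multiset.map_nsmul, Multiset.sum_nsmul, gaussPeriod_349_zero, add_assoc]

theorem gaussPeriod_one_mul_two (e : AddChar (ZMod 349) R) :
    gaussPeriod 116 e 1 * gaussPeriod 116 e 2 = 37 * gaussPeriod 116 e 1 +
      36 * gaussPeriod 116 e 2 + 43 * gaussPeriod 116 e 4 := by
  rw [gaussPeriod_mul_gaussPeriod (by norm_num), sum_gaussPeriod_eq_of_map_pow_eq (by norm_num) e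
    (t := 37 • {1} + 36 • {2} + 43 • {4}) (by decide +kernel)]
  simp [Multiset.map_nsmul, Multiset.sum_nsmul]

theorem aeval_gaussPeriod_add_six [IsDomain R] [CharZero R] {e : AddChar (ZMod 349) R}
    (he : e.IsPrimitive) : aeval (gaussPeriod 116 e 1 + 6) periodCubic.toPoly = 0 := by
  have hη₄ : gaussPeriod 116 e 4 = -1 - gaussPeriod 116 e 1 - gaussPeriod 116 e 2 := by
    linear_combination gaussPeriod_one_add_two_add_four he
  have hη₁_sq := gaussPeriod_one_mul_one e
  have hη₁η₂ := gaussPeriod_one_mul_two e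
  rw [hη₄] at hη₁_sq hη₁η₂
  have hη₂ : gaussPeriod 116 e 2 = gaussPeriod 116 e 1 ^ 2 - 6 * gaussPeriod 116 e 1 - 80 := by
    linear_combination -hη₁_sq
  rw [hη₂] at hη₁η₂
  rw [aeval_periodCubic_eq_zero_iff]
  linear_combination hη₁η₂

end GaussPeriods

section CyclotomicSubfield

variable {F K : Type*} [Field F] [Field K] [Algebra F K] {m n : ℕ} [NeZero m] {ζ : K}

theorem algEquiv_zmodChar (hζ : IsPrimitiveRoot ζ m) (σ : K ≃ₐ[F] K) (a : ZMod m) :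
    σ (AddChar.zmodChar m hζ.pow_eq_one a) =
      AddChar.zmodChar m hζ.pow_eq_one (hζ.autToPow F σ * a) := by
  have hσ : AddChar.zmodChar m hζ.pow_eq_one (hζ.autToPow F σ) = σ ζ := hζ.autToPow_spec F σ
  have ha : (hζ.autToPow F σ * a : ZMod m) = a.val • (hζ.autToPow F σ : ZMod m) := by
    rw [nsmul_eq_mul, ZMod.natCast_zmod_val, mul_comm]
  rw [ha, AddChar.map_nsmul_eq_pow, hσ, AddChar.zmodChar_apply, map_pow]

theorem algEquiv_gaussPeriod (hζ : IsPrimitiveRoot ζ m) (σ : K ≃ₐ[F] K) (c : ZMod m) :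
    σ (gaussPeriod n (AddChar.zmodChar m hζ.pow_eq_one) c) =
      gaussPeriod n (AddChar.zmodChar m hζ.pow_eq_one) (c * hζ.autToPow F σ) := by
  simp_rw [gaussPeriod, map_sum, algEquiv_zmodChar hζ σ, ← mul_assoc, mul_comm c]

theorem gaussPeriod_mem [FiniteDimensional F K] [IsGalois F K] (hζ : IsPrimitiveRoot ζ m)
    (L : IntermediateField F K) (c : ZMod m) :
    gaussPeriod (Nat.card L.fixingSubgroup) (AddChar.zmodChar m hζ.pow_eq_one) c ∈ L := by
  suffices h : ∀ σ ∈ L.fixingSubgroup, (hζ.autToPow F σ : ZMod m) ^ Nat.card L.fixingSubgroup = 1 by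
    rw [← IsGalois.fixedField_fixingSubgroup L, IntermediateField.mem_fixedField_iff,
      IsGalois.fixedField_fixingSubgroup L]
    intro σ hσ
    rw [algEquiv_gaussPeriod hζ, gaussPeriod_mul_right Nat.card_pos.ne' _ c (h σ hσ)]
  intro σ hσ
  have hσ_pow : σ ^ Nat.card L.fixingSubgroup = 1 :=
    congrArg Subtype.val (pow_card_eq_one' (x := (⟨σ, hσ⟩ : L.fixingSubgroup)))
  rw [← Units.val_pow_eq_pow_val, ← map_pow, hσ_pow, map_one, Units.val_one]

theorem isTotallyReal_of_odd_finrank {E E' : Type*} [Field E] [Field E'] [Algebra E E']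
    [IsTotallyReal E] [IsGalois E E'] (h : Odd (finrank E E')) : IsTotallyReal E' := by
  have := IsUnramifiedAtInfinitePlaces_of_odd_finrank h
  refine ⟨fun w ↦ (InfinitePlace.isUnramified_iff.mp (this.isUnramified w)).resolve_right ?_⟩
  exact InfinitePlace.not_isComplex_iff_isReal.mpr (IsTotallyReal.isReal _)

theorem isTotallyReal_intermediateField_of_odd_finrank {E E' : Type*} [Field E] [Field E']
    [Algebra E E'] [IsTotallyReal E] [IsAbelianGalois E E'] {L : IntermediateField E E'}
    (h : Odd (finrank E L)) : IsTotallyReal L :=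
  isTotallyReal_of_odd_finrank h

theorem exists_ringOfIntegers_aeval_eq_zero {E : Type*} [Field E] [CharZero E]
    {L : IntermediateField ℚ E} {P : ℤ[X]} (hP : P.Monic) {x : E} (hxL : x ∈ L)
    (hx : aeval x P = 0) : ∃ ρ : 𝓞 L, aeval ρ P = 0 := by
  have hint : IsIntegral ℤ (⟨x, hxL⟩ : L) :=
    (isIntegral_algebraMap_iff (FaithfulSMul.algebraMap_injective L E)).mp ⟨P, hP, hx⟩
  obtain ⟨ρ, hρ⟩ : ∃ ρ : 𝓞 L, algebraMap (𝓞 L) E ρ = x := ⟨⟨_, hint⟩, rfl⟩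
  refine ⟨ρ, FaithfulSMul.algebraMap_injective (𝓞 L) E ?_⟩
  rw [← aeval_algebraMap_apply, map_zero, hρ, hx]

theorem exists_aeval_periodCubic_eq_zero {E : Type*} [Field E] [CharZero E]
    [IsCyclotomicExtension {349} ℚ E] {L : IntermediateField ℚ E} (hL : finrank ℚ L = 3) :
    ∃ ρ : 𝓞 L, aeval ρ periodCubic.toPoly = 0 := by
  have := IsCyclotomicExtension.isGalois {349} ℚ E
  have := IsCyclotomicExtension.finiteDimensional {349} ℚ E
  have hE : finrank ℚ E = 348 := by
    rw [IsCyclotomicExtension.finrank (n := 349) E (cyclotomic.irreducible_rat (by norm_num)),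
      Nat.totient_prime (by norm_num)]
  have hcard : Nat.card L.fixingSubgroup = 116 := by
    have h := finrank_mul_finrank ℚ L E
    rw [hL, hE] at h
    rw [IsGalois.card_fixingSubgroup_eq_finrank]
    omega
  have hζ := IsCyclotomicExtension.zeta_spec 349 ℚ E
  have hη := gaussPeriod_mem (F := ℚ) hζ L 1
  rw [hcard] at hη
  have hroot := aeval_gaussPeriod_add_six (AddChar.zmodChar_primitive_of_primitive_root 349 hζ)
  exact exists_ringOfIntegers_aeval_eq_zero (Cubic.monic_of_a_eq_one (P := periodCubic) rfl)
    (add_mem hη (ofNat_mem L 6)) hroot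

end CyclotomicSubfield

end CubicField349

/-- Let `ℓ = 349` and let `L` be the unique degree-3 intermediate field of `ℚ(ζ_ℓ)/ℚ`.
Then the class number of `L` is `4` and the ideal class group of `L` is isomorphic to
`(ℤ/2ℤ) × (ℤ/2ℤ)`. -/
theorem classGroup_of_cubic_subfield_349
    (L : IntermediateField ℚ (CyclotomicField 349 ℚ)) (hL : Module.finrank ℚ L = 3) :
    NumberField.classNumber L = 4 ∧
    Nonempty (ClassGroup (NumberField.RingOfIntegers L) ≃*
      Multiplicative (ZMod 2 × ZMod 2)) := by
  have : IsCyclotomicExtension {349} ℚ (CyclotomicField 349 ℚ) :=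
    CyclotomicField.isCyclotomicExtension 349 ℚ
  have := IsCyclotomicExtension.isAbelianGalois {349} ℚ (CyclotomicField 349 ℚ)
  have : NumberField.IsTotallyReal L :=
    CubicField349.isTotallyReal_intermediateField_of_odd_finrank (by rw [hL]; decide)
  obtain ⟨ρ, hρ⟩ := CubicField349.exists_aeval_periodCubic_eq_zero hL
  have : IsKleinFour (ClassGroup (NumberField.RingOfIntegers L)) :=
    CubicField349.isKleinFour_classGroup (by convert hL) hρ
  refine ⟨?_, IsKleinFour.nonempty_mulEquiv⟩
  rw [NumberField.classNumber, ← Nat.card_eq_fintype_card, IsKleinFour.card_four]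
end
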